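/- Let F be a totally real number field, n ≥ 2 an integer, and L a positive definite integral O_F-lattice of rank n+1. Then L is locally n-ADC if and only if L is O_F-maximal. -/

import Mathlib

/-
Quadratic lattices over (local and global) fields, following
"On n-ADC integral quadratic lattices over totally real number fields".

A non-archimedean local field of characteristic ≠ 2 is formalized as a field `K`
together with a valuation subring `O` of `K` which is a complete discrete valuation
ring with finite residue field (completeness is expressed as adic completeness with
respect to the maximal ideal); `K` is automatically the fraction field of `O`.
-/

noncomputable section

namespace QLat

variable {K : Type} [Field K]

/-- The bilinear form associated to a quadratic form `Q`, i.e. `B x y = (Q(x+y)-Q(x)-Q(y))/2`,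
so that `B x x = Q x`. -/
def bil {V : Type} [AddCommGroup V] [Module K V] (Q : QuadraticForm K V) (x y : V) : K :=
  (2 : K)⁻¹ * QuadraticMap.polar (⇑Q) x y

/-- A quadratic form (space) is nondegenerate. -/
def Nondeg {V : Type} [AddCommGroup V] [Module K V] (Q : QuadraticForm K V) : Prop :=
  ∀ x : V, (∀ y : V, QuadraticMap.polar (⇑Q) x y = 0) → x = 0

/-- The `O`-span of a subset `t` of a `K`-vector space: all finite `O`-linear
combinations of elements of `t`. -/
def ospan (O : Subring K) {V : Type} [AddCommGroup V] [Module K V] (t : Set V) : Set V :=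
  {x | ∃ (m : ℕ) (c : Fin m → K) (g : Fin m → V),
    (∀ i, c i ∈ O) ∧ (∀ i, g i ∈ t) ∧ x = ∑ i, c i • g i}

/-- An `O`-lattice in `V`: a finitely generated `O`-submodule of `V`. -/
def IsLattice (O : Subring K) {V : Type} [AddCommGroup V] [Module K V] (L : Set V) : Prop :=
  ∃ t : Finset V, L = ospan O (t : Set V)

/-- An `O`-lattice on `V`: a finitely generated `O`-submodule of `V` spanning `V` over `K`. -/
def IsLatticeOn (O : Subring K) {V : Type} [AddCommGroup V] [Module K V] (L : Set V) : Prop :=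
  IsLattice O L ∧ Submodule.span K L = ⊤

/-- The lattice `L` is integral: `𝔫(L) ⊆ O`, i.e. all values of `Q` on `L` lie in `O`. -/
def IsIntegral (O : Subring K) {V : Type} [AddCommGroup V] [Module K V]
    (Q : QuadraticForm K V) (L : Set V) : Prop :=
  ∀ x ∈ L, Q x ∈ O

/-- The quadratic space `(V,Q)` represents the quadratic space `(W,Q')`. -/
def SpaceRep {W V : Type} [AddCommGroup W] [Module K W] [AddCommGroup V] [Module K V]
    (Q' : QuadraticForm K W) (Q : QuadraticForm K V) : Prop :=
  ∃ σ : W →ₗ[K] V, Function.Injective σ ∧ ∀ x, Q (σ x) = Q' x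

/-- The quadratic spaces `(W,Q')` and `(V,Q)` are isometric. -/
def SpaceIsom {W V : Type} [AddCommGroup W] [Module K W] [AddCommGroup V] [Module K V]
    (Q' : QuadraticForm K W) (Q : QuadraticForm K V) : Prop :=
  ∃ σ : W ≃ₗ[K] V, ∀ x, Q (σ x) = Q' x

/-- The lattice `M` (in `(V,Q)`) represents the lattice `N` (a full lattice in `(W,Q')`):
there is an injective form-preserving `K`-linear map carrying `N` into `M`.  (For a full
lattice `N` this is equivalent to the existence of an injective form-preserving
`O`-linear map `N → M`, since `K` is the fraction field of `O`.) -/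
def LatRep {W V : Type} [AddCommGroup W] [Module K W] [AddCommGroup V] [Module K V]
    (Q' : QuadraticForm K W) (Q : QuadraticForm K V) (N : Set W) (M : Set V) : Prop :=
  ∃ σ : W →ₗ[K] V, Function.Injective σ ∧ (∀ x, Q (σ x) = Q' x) ∧ σ '' N ⊆ M

/-- The lattices `N` (full in `(W,Q')`) and `M` (in `(V,Q)`) are isometric. -/
def LatIsom {W V : Type} [AddCommGroup W] [Module K W] [AddCommGroup V] [Module K V]
    (Q' : QuadraticForm K W) (Q : QuadraticForm K V) (N : Set W) (M : Set V) : Prop :=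
  ∃ σ : W →ₗ[K] V, Function.Injective σ ∧ (∀ x, Q (σ x) = Q' x) ∧ σ '' N = M

/-- The lattice `L` is `O`-maximal: it is integral and is not properly contained in any
(finitely generated) lattice on the same subspace with integral norm. -/
def IsMaximal (O : Subring K) {V : Type} [AddCommGroup V] [Module K V]
    (Q : QuadraticForm K V) (L : Set V) : Prop :=
  IsIntegral O Q L ∧
    ∀ L' : Set V, IsLattice O L' → Submodule.span K L' = Submodule.span K L →
      L ⊆ L' → IsIntegral O Q L' → L' = L

/-- The lattice `L` is `n`-ADC: every integral `O`-lattice `N` of rank `n` (on a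
nondegenerate quadratic space `W` of dimension `n`) whose ambient space is represented by
the space `(V,Q) = K·L` is represented by `L`. -/
def IsADC (O : Subring K) {V : Type} [AddCommGroup V] [Module K V]
    (Q : QuadraticForm K V) (L : Set V) (n : ℕ) : Prop :=
  ∀ (W : Type) [AddCommGroup W] [Module K W] (Q' : QuadraticForm K W),
    Nondeg Q' → Module.finrank K W = n →
    ∀ N : Set W, IsLatticeOn O N → IsIntegral O Q' N →
      SpaceRep Q' Q → LatRep Q' Q N L

/-- The lattice `L` is `n`-universal: it represents every integral `O`-lattice of rank `n`. -/
def IsUniversal (O : Subring K) {V : Type} [AddCommGroup V] [Module K V]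
    (Q : QuadraticForm K V) (L : Set V) (n : ℕ) : Prop :=
  ∀ (W : Type) [AddCommGroup W] [Module K W] (Q' : QuadraticForm K W),
    Nondeg Q' → Module.finrank K W = n →
    ∀ N : Set W, IsLatticeOn O N → IsIntegral O Q' N → LatRep Q' Q N L

end QLat

open scoped TensorProduct
open IsDedekindDomain

namespace QGlob

/-- Scalar-commutation instance for the completed field, registered to help instance
search for modules over `F_v`. -/
noncomputable instance (F : Type) [Field F] [NumberField F]
    (v : HeightOneSpectrum (NumberField.RingOfIntegers F)) :
    SMulCommClass F (v.adicCompletion F) (v.adicCompletion F) :=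
  Algebra.to_smulCommClass


variable (F : Type) [Field F] [NumberField F]

/-- `F` is totally real: every infinite place of `F` is real. -/
def TotallyReal : Prop := ∀ v : NumberField.InfinitePlace F, v.IsReal

/-- The ring of integers `O_F` of `F`, as a subring of `F`. -/
def OF : Subring F := (integralClosure ℤ F).toSubring

/-- A quadratic form over the totally real field `F` is positive definite if its values
at nonzero vectors are positive under every real embedding of `F`. -/
def PosDef {V : Type} [AddCommGroup V] [Module F V] (Q : QuadraticForm F V) : Prop :=
  ∀ (φ : F →+* ℝ) (x : V), x ≠ 0 → 0 < φ (Q x)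

/-- The completion `F_v` of `F` at a finite place `v`. -/
abbrev Fv (v : HeightOneSpectrum (NumberField.RingOfIntegers F)) : Type :=
  v.adicCompletion F

/-- The ring of integers of `F_v`, as a subring of `F_v`. -/
def Ov (v : HeightOneSpectrum (NumberField.RingOfIntegers F)) : Subring (Fv F v) :=
  (v.adicCompletionIntegers F).toSubring

/-- The completion `V_v = F_v ⊗_F V` of a quadratic space `V` over `F` at `v`. -/
abbrev Vv (V : Type) [AddCommGroup V] [Module F V]
    (v : HeightOneSpectrum (NumberField.RingOfIntegers F)) : Type :=
  (Fv F v) ⊗[F] V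

/-- The extension of a quadratic form `Q` on `V` to `V_v`. -/
noncomputable def Qv {V : Type} [AddCommGroup V] [Module F V] (Q : QuadraticForm F V)
    (v : HeightOneSpectrum (NumberField.RingOfIntegers F)) :
    QuadraticForm (Fv F v) (Vv F V v) :=
  letI : Invertible (2 : F) := invertibleOfNonzero two_ne_zero
  Q.baseChange (Fv F v)

/-- The canonical map `V → V_v`. -/
noncomputable def toVv {V : Type} [AddCommGroup V] [Module F V]
    (v : HeightOneSpectrum (NumberField.RingOfIntegers F)) : V → Vv F V v :=
  fun x => (1 : Fv F v) ⊗ₜ[F] x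

/-- The completion `L_v = O_{F_v} ⊗ L` of a lattice `L ⊆ V` at `v`, i.e. the
`O_{F_v}`-span of the image of `L` in `V_v`. -/
noncomputable def Lv {V : Type} [AddCommGroup V] [Module F V] (L : Set V)
    (v : HeightOneSpectrum (NumberField.RingOfIntegers F)) : Set (Vv F V v) :=
  QLat.ospan (Ov F v) (toVv F v '' L)

variable {V : Type} [AddCommGroup V] [Module F V]

/-- `L` is globally `n`-ADC: every positive definite integral `O_F`-lattice `N` of rank
`n` whose ambient space `F·N` is represented by `F·L` is represented by `L`. -/
def IsGlobADC (Q : QuadraticForm F V) (L : Set V) (n : ℕ) : Prop :=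
  ∀ (W : Type) [AddCommGroup W] [Module F W] (Q' : QuadraticForm F W),
    QLat.Nondeg Q' → PosDef F Q' → Module.finrank F W = n →
    ∀ N : Set W, QLat.IsLatticeOn (OF F) N → QLat.IsIntegral (OF F) Q' N →
      QLat.SpaceRep Q' Q → QLat.LatRep Q' Q N L

/-- `L` is globally `n`-universal: it represents every positive definite integral
`O_F`-lattice of rank `n`. -/
def IsGlobUniversal (Q : QuadraticForm F V) (L : Set V) (n : ℕ) : Prop :=
  ∀ (W : Type) [AddCommGroup W] [Module F W] (Q' : QuadraticForm F W),
    QLat.Nondeg Q' → PosDef F Q' → Module.finrank F W = n →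
    ∀ N : Set W, QLat.IsLatticeOn (OF F) N → QLat.IsIntegral (OF F) Q' N →
      QLat.LatRep Q' Q N L

/-- `L` is `n`-regular: it represents every positive definite integral `O_F`-lattice `N`
of rank `n` which is represented by `L` locally at every finite place. -/
def IsNRegular (Q : QuadraticForm F V) (L : Set V) (n : ℕ) : Prop :=
  ∀ (W : Type) [AddCommGroup W] [Module F W] (Q' : QuadraticForm F W),
    QLat.Nondeg Q' → PosDef F Q' → Module.finrank F W = n →
    ∀ N : Set W, QLat.IsLatticeOn (OF F) N → QLat.IsIntegral (OF F) Q' N →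
      (∀ v : HeightOneSpectrum (NumberField.RingOfIntegers F),
        QLat.LatRep (Qv F Q' v) (Qv F Q v) (Lv F N v) (Lv F L v)) →
      QLat.LatRep Q' Q N L

/-- `L` is locally `n`-ADC: `L_v` is `n`-ADC for every finite place `v`. -/
def IsLocADC (Q : QuadraticForm F V) (L : Set V) (n : ℕ) : Prop :=
  ∀ v : HeightOneSpectrum (NumberField.RingOfIntegers F),
    QLat.IsADC (Ov F v) (Qv F Q v) (Lv F L v) n

/-- `L` is locally `n`-universal: `L_v` is `n`-universal for every finite place `v`. -/
def IsLocUniversal (Q : QuadraticForm F V) (L : Set V) (n : ℕ) : Prop :=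
  ∀ v : HeightOneSpectrum (NumberField.RingOfIntegers F),
    QLat.IsUniversal (Ov F v) (Qv F Q v) (Lv F L v) n

/-- `L` has class number one: every `O_F`-lattice in the genus of `L` (i.e. every lattice
on a space isometric to `F·L` which is isometric to `L` at every finite place) is
isometric to `L`. -/
def ClassNumberOne (Q : QuadraticForm F V) (L : Set V) : Prop :=
  ∀ (W : Type) [AddCommGroup W] [Module F W] (Q' : QuadraticForm F W),
    QLat.Nondeg Q' →
    ∀ N : Set W, QLat.IsLatticeOn (OF F) N →
      QLat.SpaceIsom Q' Q →
      (∀ v : HeightOneSpectrum (NumberField.RingOfIntegers F),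
        QLat.LatIsom (Qv F Q' v) (Qv F Q v) (Lv F N v) (Lv F L v)) →
      QLat.LatIsom Q' Q N L

end QGlob

open QLat QGlob

/-
Maximality can be tested at the completions, since a vector of a completed lattice agrees, up to
the completion of a given sublattice, with a global vector. So everything happens over a complete
discrete valuation ring `O` with uniformizer `p`, finite residue field and fraction field `K`.

An integral lattice on a subspace lies in a maximal lattice of the whole space, and maximal lattices
on isometric spaces are isometric: split off hyperbolic planes, and note that an anisotropic space
has `{x | Q x ∈ O}` as its only maximal lattice. Hence maximal lattices are `n`-ADC.

Conversely, let `L ⊂ M` be `n`-ADC in a strictly larger integral lattice, and let `N` be maximal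
on an `n`-dimensional space represented by `V`. The copy of `N` inside `L` is the full intersection
of `M` with a hyperplane, so `L` is contained in `N + pM`, and the residual length of `L` (the
dimension of the nonsingular part of `Q` mod `p`) equals that of `N`. So this length would be the
same for all such `N`. For `n ≥ 2` it is not: in an anisotropic space of dimension at least `3`,
Chevalley–Warning shows that both `Q` and `p⁻¹ • Q` attain unit values, and the complements of two
such vectors have different residual lengths; the isotropic case reduces to this one and to
hyperbolic planes.
-/

namespace QLat
open QuadraticMap

variable {K : Type} [Field K] {O : Subring K} {V : Type} [AddCommGroup V] [Module K V]

section IntegralLattices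

variable {Q : QuadraticForm K V} {L : Submodule O V}

theorem ospan_eq_span (t : Set V) : ospan O t = Submodule.span O t := by
  ext x
  constructor
  · rintro ⟨m, c, g, hc, hg, rfl⟩
    exact Submodule.sum_mem _ fun i _ ↦
      Submodule.smul_mem _ (⟨c i, hc i⟩ : O) (Submodule.subset_span (hg i))
  · intro hx
    obtain ⟨m, c, g, rfl⟩ := Submodule.mem_span_set'.1 hx
    exact ⟨m, fun i ↦ c i, fun i ↦ g i, fun i ↦ (c i).2, fun i ↦ (g i).2, rfl⟩

theorem isLattice_iff_exists_fg {S : Set V} :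
    IsLattice O S ↔ ∃ L : Submodule O V, L.FG ∧ (L : Set V) = S := by
  constructor
  · rintro ⟨t, rfl⟩
    exact ⟨Submodule.span O t, ⟨t, rfl⟩, (ospan_eq_span _).symm⟩
  · rintro ⟨_, ⟨t, rfl⟩, rfl⟩
    exact ⟨t, (ospan_eq_span _).symm⟩

/-- `L` is an `O`-lattice on the whole quadratic space `(V, Q)`, and its norm is integral. -/
structure IsIntegralLattice (Q : QuadraticForm K V) (L : Submodule O V) : Prop
    extends Submodule.IsLattice K L where
  map_mem : ∀ x ∈ L, Q x ∈ O

/-- An integral lattice which contains every vector that can be adjoined to it without destroying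
integrality. By `IsIntegralLattice.isMaximal_iff` these are the `O`-maximal lattices. -/
structure IsMaximalLattice (Q : QuadraticForm K V) (L : Submodule O V) : Prop
    extends IsIntegralLattice Q L where
  mem_of_integral : ∀ x, Q x ∈ O → (∀ y ∈ L, polar Q x y ∈ O) → x ∈ L

theorem polar_mem (hL : ∀ x ∈ L, Q x ∈ O) {x y : V} (hx : x ∈ L) (hy : y ∈ L) :
    polar Q x y ∈ O :=
  O.sub_mem (O.sub_mem (hL _ (L.add_mem hx hy)) (hL _ hx)) (hL _ hy)

theorem map_mem_of_mem_sup_span_singleton (hL : ∀ x ∈ L, Q x ∈ O) {x : V} (hx : Q x ∈ O)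
    (hxL : ∀ y ∈ L, polar Q x y ∈ O) {z : V} (hz : z ∈ L ⊔ Submodule.span O {x}) : Q z ∈ O := by
  obtain ⟨y, hy, w, hw, rfl⟩ := Submodule.mem_sup.1 hz
  obtain ⟨a, rfl⟩ := Submodule.mem_span_singleton.1 hw
  rw [QuadraticMap.map_add Q, QuadraticMap.map_smul_of_tower, polar_smul_right_of_tower, polar_comm]
  exact O.add_mem (O.add_mem (hL _ hy) (O.mul_mem (a * a).2 hx)) (O.mul_mem a.2 (hxL _ hy))

theorem span_eq_top_mono {M N : Submodule O V} (h : M ≤ N)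
    (hM : Submodule.span K (M : Set V) = ⊤) : Submodule.span K (N : Set V) = ⊤ :=
  top_le_iff.1 (hM ▸ Submodule.span_mono h)

theorem span_eq_top_of_forall_exists_smul_mem {L : Submodule O V}
    (hL : ∀ x, ∃ a : O, a ≠ 0 ∧ a • x ∈ L) : Submodule.span K (L : Set V) = ⊤ := by
  refine Submodule.eq_top_iff'.2 fun x ↦ ?_
  obtain ⟨a, ha, hx⟩ := hL x
  have ha' : (a : K) ≠ 0 := by simpa using ha
  exact (Submodule.smul_mem_iff _ ha').1 (Submodule.subset_span hx)

theorem IsIntegralLattice.isMaximal_iff (h : IsIntegralLattice Q L) :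
    IsMaximal O Q (L : Set V) ↔ IsMaximalLattice Q L := by
  constructor
  · rintro ⟨-, hmax⟩
    refine ⟨h, fun x hx hxL ↦ ?_⟩
    have hle : L ≤ L ⊔ Submodule.span O {x} := le_sup_left
    have heq : ((L ⊔ Submodule.span O {x} : Submodule O V) : Set V) = L :=
      hmax _ (isLattice_iff_exists_fg.2 ⟨_, h.fg.sup (Submodule.fg_span_singleton x), rfl⟩)
        ((span_eq_top_mono hle h.span_eq_top).trans h.span_eq_top.symm) hle
        fun z hz ↦ map_mem_of_mem_sup_span_singleton h.map_mem hx hxL hz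
    exact heq.subset (Submodule.mem_sup_right (Submodule.mem_span_singleton_self x))
  · intro hmax
    refine ⟨h.map_mem, fun L' hL' _ hLL' hint ↦ ?_⟩
    obtain ⟨L', -, rfl⟩ := isLattice_iff_exists_fg.1 hL'
    exact Set.Subset.antisymm
      (fun x hx ↦ hmax.mem_of_integral x (hint x hx) fun y hy ↦ polar_mem hint hx (hLL' hy)) hLL'

theorem exists_isIntegralLattice_coe_eq {S : Set V} (hS : IsLatticeOn O S)
    (hint : IsIntegral O Q S) : ∃ L : Submodule O V, IsIntegralLattice Q L ∧ (L : Set V) = S := by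
  obtain ⟨L, hfg, rfl⟩ := isLattice_iff_exists_fg.1 hS.1
  exact ⟨L, { fg := hfg, span_eq_top := hS.2, map_mem := hint }, rfl⟩

theorem IsIntegralLattice.isLatticeOn (h : IsIntegralLattice Q L) : IsLatticeOn O (L : Set V) :=
  ⟨isLattice_iff_exists_fg.2 ⟨L, h.fg, rfl⟩, h.span_eq_top⟩

end IntegralLattices

theorem polarBilin_nondegenerate {Q : QuadraticForm K V} (hQ : Nondeg Q) :
    LinearMap.BilinForm.Nondegenerate (polarBilin Q) :=
  (LinearMap.IsRefl.nondegenerate_iff_separatingLeft fun x y h ↦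
    (polar_comm Q y x).trans h).2 hQ

theorem exists_fg_forall_integral_le [FiniteDimensional K V] {Q : QuadraticForm K V}
    (hQ : Nondeg Q) {N : Submodule O V} (hN : Submodule.span K (N : Set V) = ⊤) :
    ∃ D : Submodule O V, D.FG ∧ ∀ M, N ≤ M → (∀ x ∈ M, Q x ∈ O) → M ≤ D := by
  classical
  obtain ⟨s, hsN, hspan, hli⟩ := exists_linearIndependent K (N : Set V)
  let b : Module.Basis s K V := .mk hli (by rw [Subtype.range_coe, hspan, hN])
  have : Finite s := Module.Finite.finite_basis b
  have hb : Set.range b = s := by simp [b]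
  refine ⟨LinearMap.BilinForm.dualSubmodule (polarBilin Q) (Submodule.span O (Set.range b)), ?_, ?_⟩
  · rw [LinearMap.BilinForm.dualSubmodule_span_of_basis _ (polarBilin_nondegenerate hQ)]
    exact Submodule.fg_span (Set.finite_range _)
  · intro M hNM hM x hx y hy
    have hyM : y ∈ M := hNM (Submodule.span_le.2 (hb.subset.trans hsN) hy)
    exact Submodule.mem_one.2 ⟨⟨_, polar_mem hM hx hyM⟩, rfl⟩

theorem IsIntegralLattice.exists_le_isMaximalLattice [IsNoetherianRing O] [FiniteDimensional K V]
    {Q : QuadraticForm K V} (hQ : Nondeg Q) {N : Submodule O V} (hN : IsIntegralLattice Q N) :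
    ∃ M, N ≤ M ∧ IsMaximalLattice Q M := by
  obtain ⟨D, hD, hle⟩ := exists_fg_forall_integral_le hQ hN.span_eq_top
  have : IsNoetherian O D := isNoetherian_of_fg_of_noetherian D hD
  have : WellFoundedGT (Set.Iic D) := (Submodule.mapIic D).symm.toOrderEmbedding.wellFoundedGT
  obtain ⟨M, ⟨hNM, hint⟩, hmax⟩ := (wellFounded_gt (α := Set.Iic D)).has_min
    {M | N ≤ M ∧ ∀ x ∈ (M : Submodule O V), Q x ∈ O}
    ⟨⟨N, hle N le_rfl hN.map_mem⟩, le_rfl, hN.map_mem⟩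
  have hM : IsIntegralLattice Q (M : Submodule O V) :=
    { fg := Module.Finite.iff_fg.1 (@Module.IsNoetherian.finite _ _ _ _ _ (isNoetherian_of_le M.2))
      span_eq_top := span_eq_top_mono hNM hN.span_eq_top
      map_mem := hint }
  refine ⟨M, hNM, hM.isMaximal_iff.1 ⟨hint, fun L' hL' _ hML' hint' ↦ ?_⟩⟩
  obtain ⟨L', -, rfl⟩ := isLattice_iff_exists_fg.1 hL'
  have hNL' : N ≤ L' := hNM.trans hML'
  have heq : M = ⟨L', hle L' hNL' hint'⟩ := eq_of_le_of_not_lt hML' (hmax _ ⟨hNL', hint'⟩)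
  exact congrArg (fun L : Set.Iic D ↦ ((L : Submodule O V) : Set V)) heq.symm

section FractionField

variable [IsFractionRing O K] {Q : QuadraticForm K V}

theorem exists_smul_mem_of_span_eq_top {L : Submodule O V}
    (hL : Submodule.span K (L : Set V) = ⊤) (x : V) : ∃ a : O, a ≠ 0 ∧ a • x ∈ L := by
  obtain ⟨a, ha⟩ := multiple_mem_span_of_mem_localization_span (nonZeroDivisors O) K (L : Set V) x
    (hL ▸ Submodule.mem_top)
  exact ⟨a, nonZeroDivisors.coe_ne_zero a, Submodule.span_eq L ▸ ha⟩

theorem exists_smul_mem_of_fg {M : Submodule O V} (hM : M.FG) (f : V →ₗ[K] K) :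
    ∃ a : O, a ≠ 0 ∧ ∀ x ∈ M, (a : K) * f x ∈ O := by
  obtain ⟨a, ha, h⟩ := FractionalIdeal.isFractional_of_fg (S := nonZeroDivisors O)
    (hM.map (f.restrictScalars O))
  refine ⟨a, nonZeroDivisors.ne_zero ha, fun x hx ↦ ?_⟩
  obtain ⟨b, hb⟩ := h (f x) (Submodule.mem_map_of_mem hx)
  exact (show (b : K) = a * f x from hb) ▸ b.2

theorem exists_mul_mem (x : K) : ∃ a : O, a ≠ 0 ∧ (a : K) * x ∈ O := by
  obtain ⟨a, b, hb⟩ := IsLocalization.exists_integer_multiple (nonZeroDivisors O) x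
  exact ⟨a, nonZeroDivisors.coe_ne_zero a, (show (b : K) = a * x from hb) ▸ b.2⟩

theorem exists_smul_forall_sup_span_singleton_map_mem {N : Submodule O V} (hfg : N.FG)
    (hN : ∀ x ∈ N, Q x ∈ O) (x : V) :
    ∃ a : O, a ≠ 0 ∧ ∀ z ∈ N ⊔ Submodule.span O {a • x}, Q z ∈ O := by
  obtain ⟨a, ha, haN⟩ := exists_smul_mem_of_fg hfg (polarBilin Q x)
  obtain ⟨b, hb, hbQ⟩ := exists_mul_mem (O := O) (Q x)
  refine ⟨a * b, mul_ne_zero ha hb,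
    fun z hz ↦ map_mem_of_mem_sup_span_singleton hN ?_ (fun y hy ↦ ?_) hz⟩
  · rw [QuadraticMap.map_smul_of_tower]
    convert O.mul_mem (a * a * b).2 hbQ using 1
    simp only [Subring.smul_def, smul_eq_mul, Subring.coe_mul]
    ring
  · rw [polar_smul_left_of_tower]
    convert O.mul_mem b.2 (haN y hy) using 1
    simp only [Subring.smul_def, smul_eq_mul, Subring.coe_mul, polarBilin_apply_apply]
    ring

theorem exists_le_isIntegralLattice [FiniteDimensional K V] {N : Submodule O V} (hfg : N.FG)
    (hN : ∀ x ∈ N, Q x ∈ O) : ∃ M, N ≤ M ∧ IsIntegralLattice Q M := by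
  classical
  have key (s : Finset V) : ∃ M : Submodule O V, N ≤ M ∧ M.FG ∧ (∀ x ∈ M, Q x ∈ O) ∧
      (s : Set V) ⊆ Submodule.span K (M : Set V) := by
    induction s using Finset.induction_on with
    | empty => exact ⟨N, le_rfl, hfg, hN, by simp⟩
    | insert x s _ ih =>
      obtain ⟨M, hNM, hM, hMQ, hs⟩ := ih
      obtain ⟨a, ha, haQ⟩ := exists_smul_forall_sup_span_singleton_map_mem hM hMQ x
      have ha' : (a : K) ≠ 0 := by simpa using ha
      have hle : M ≤ M ⊔ Submodule.span O {a • x} := le_sup_left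
      refine ⟨M ⊔ Submodule.span O {a • x}, hNM.trans hle,
        hM.sup (Submodule.fg_span_singleton _), haQ, ?_⟩
      rw [Finset.coe_insert, Set.insert_subset_iff]
      refine ⟨(Submodule.smul_mem_iff _ ha').1 (Submodule.subset_span ?_),
        hs.trans (Submodule.span_mono hle)⟩
      exact Submodule.mem_sup_right (Submodule.mem_span_singleton_self (a • x))
  obtain ⟨s, hs⟩ := IsNoetherian.noetherian (⊤ : Submodule K V)
  obtain ⟨M, hNM, hM, hMQ, hsM⟩ := key s
  exact ⟨M, hNM,
    { fg := hM, span_eq_top := top_le_iff.1 (hs ▸ Submodule.span_le.2 hsM), map_mem := hMQ }⟩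

theorem exists_le_isMaximalLattice [IsNoetherianRing O] [FiniteDimensional K V] (hQ : Nondeg Q)
    {N : Submodule O V} (hfg : N.FG) (hN : ∀ x ∈ N, Q x ∈ O) :
    ∃ M, N ≤ M ∧ IsMaximalLattice Q M := by
  obtain ⟨N', hNN', hN'⟩ := exists_le_isIntegralLattice hfg hN
  obtain ⟨M, hN'M, hM⟩ := hN'.exists_le_isMaximalLattice hQ
  exact ⟨M, hNN'.trans hN'M, hM⟩

theorem exists_isMaximalLattice [IsNoetherianRing O] [FiniteDimensional K V] (hQ : Nondeg Q) :
    ∃ M : Submodule O V, IsMaximalLattice Q M := by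
  obtain ⟨M, -, hM⟩ := exists_le_isMaximalLattice (O := O) hQ Submodule.fg_bot (by simp)
  exact ⟨M, hM⟩

end FractionField

section Uniformizer

variable {p : O} {x : K}

theorem mem_of_inv_mul_mem (hp : p ≠ 0) (hx : (p : K)⁻¹ * x ∈ O) : x ∈ O := by
  have hp' : (p : K) ≠ 0 := by simpa using hp
  simpa only [mul_inv_cancel_left₀ hp'] using O.mul_mem p.2 hx

theorem inv_mul_coe_mem_iff_dvd (hp : p ≠ 0) {a : O} : (p : K)⁻¹ * a ∈ O ↔ p ∣ a := by
  have hp' : (p : K) ≠ 0 := by simpa using hp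
  constructor
  · intro h
    exact ⟨⟨_, h⟩, Subtype.ext (mul_inv_cancel_left₀ hp' _).symm⟩
  · rintro ⟨b, rfl⟩
    simp [inv_mul_cancel_left₀ hp']

theorem inv_notMem_of_irreducible (hp : Irreducible p) : (p : K)⁻¹ ∉ O := fun h ↦
  hp.not_isUnit <| isUnit_of_dvd_one <|
    (inv_mul_coe_mem_iff_dvd hp.ne_zero).1 (by simpa using h)

variable [IsFractionRing O K] [IsDiscreteValuationRing O]

theorem mem_or_inv_mul_inv_mem (hp : Irreducible p) (x : K) : x ∈ O ∨ (p : K)⁻¹ * x⁻¹ ∈ O := by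
  rcases ValuationRing.isInteger_or_isInteger O x with ⟨a, rfl⟩ | ⟨a, ha⟩
  · exact .inl a.2
  · have ha' : (a : K) = x⁻¹ := ha
    by_cases hu : IsUnit a
    · obtain ⟨b, hab⟩ := hu.exists_right_inv
      have hab' : x⁻¹ * b = 1 := by rw [← ha']; exact congrArg Subtype.val hab
      left
      rw [← inv_inv x, ← eq_inv_of_mul_eq_one_right hab']
      exact b.2
    · right
      rw [← ha', inv_mul_coe_mem_iff_dvd hp.ne_zero, ← Ideal.mem_span_singleton,
        ← hp.maximalIdeal_eq]
      exact hu

theorem inv_mem_of_inv_mul_notMem (hp : Irreducible p) (hx : (p : K)⁻¹ * x ∉ O) : x⁻¹ ∈ O := by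
  have hp' : (p : K) ≠ 0 := by simpa using hp.ne_zero
  have h := (mem_or_inv_mul_inv_mem hp _).resolve_left hx
  rwa [mul_inv, inv_inv, inv_mul_cancel_left₀ hp'] at h

end Uniformizer

section Anisotropic

variable [HenselianLocalRing O] {Q : QuadraticForm K V}

theorem polar_eq_zero_of_anisotropic (hQ : Q.Anisotropic) {x y : V} {c : O}
    (hc : c ∈ IsLocalRing.maximalIdeal O) (h : Q x * Q y = c * polar Q x y ^ 2) :
    polar Q x y = 0 := by
  obtain ⟨s, hs, hs0⟩ := HenselianLocalRing.is_henselian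
    (Polynomial.X ^ 2 - Polynomial.X + Polynomial.C c) (by monicity!) 0 (by simpa using hc)
    (by simp)
  rw [sub_zero] at hs0
  set b := polar Q x y with hb
  have hs2 : (s : K) ^ 2 - s + c = 0 := by
    simpa using congrArg (Subtype.val : O → K) (Polynomial.IsRoot.def.1 hs)
  have hunit : IsUnit (2 * s - 1) :=
    isUnit_of_mul_isUnit_right (x := -1) <| by
      simpa using (IsLocalRing.isUnit_one_sub_self_of_mem_nonunits _
        (Ideal.mul_mem_left _ 2 hs0))
  -- `s` is chosen to make this vector isotropic
  have hz : Q y • x + (b * (s - 1)) • y = 0 := hQ _ <| by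
    rw [QuadraticMap.map_add Q, QuadraticMap.map_smul, QuadraticMap.map_smul, polar_smul_left,
      polar_smul_right, ← hb]
    simp only [smul_eq_mul]
    linear_combination Q y * h + b ^ 2 * Q y * hs2
  have hpol : b * (Q y * (2 * s - 1)) = 0 := by
    have h0 : polar Q (Q y • x + (b * (s - 1)) • y) y = 0 := by rw [hz, polar_zero_left]
    rw [polar_add_left, polar_smul_left, polar_smul_left, ← hb, QuadraticMap.polar_self] at h0
    simp only [smul_eq_mul, nsmul_eq_mul, Nat.cast_ofNat] at h0
    linear_combination h0
  rcases mul_eq_zero.1 hpol with hb0 | hy0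
  · exact hb0
  · have hne : (2 * s - 1 : K) ≠ 0 := fun h0 ↦ hunit.ne_zero (Subtype.ext h0)
    rw [hb, hQ _ ((mul_eq_zero.1 hy0).resolve_right hne), polar_zero_right]

variable [IsFractionRing O K] [IsDiscreteValuationRing O] {p : O}

theorem polar_mem_of_anisotropic (hQ : Q.Anisotropic) {x y : V} (hx : Q x ∈ O) (hy : Q y ∈ O) :
    polar Q x y ∈ O := by
  obtain ⟨p, hp⟩ := IsDiscreteValuationRing.exists_irreducible O
  by_contra hb
  have hb0 : polar Q x y ≠ 0 := fun h ↦ hb (h ▸ O.zero_mem)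
  have hp0 : (p : K) ≠ 0 := by simpa using hp.ne_zero
  obtain ⟨b', hb'⟩ : ∃ b' : O, (b' : K) = (p : K)⁻¹ * (polar Q x y)⁻¹ :=
    ⟨⟨_, (mem_or_inv_mul_inv_mem hp _).resolve_left hb⟩, rfl⟩
  have hc : p * (p * b' ^ 2 * ⟨Q x, hx⟩ * ⟨Q y, hy⟩) ∈ IsLocalRing.maximalIdeal O :=
    Ideal.mul_mem_right _ _ hp.not_isUnit
  refine hb0 (polar_eq_zero_of_anisotropic hQ hc ?_)
  push_cast
  rw [hb']
  field_simp

theorem inv_mul_polar_mem_of_anisotropic (hp : Irreducible p) (hQ : Q.Anisotropic) {x y : V}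
    (hx : (p : K)⁻¹ * Q x ∈ O) (hy : Q y ∈ O) : (p : K)⁻¹ * polar Q x y ∈ O := by
  by_contra hb
  have hb0 : polar Q x y ≠ 0 := fun h ↦ hb (by rw [h, mul_zero]; exact O.zero_mem)
  have hp0 : (p : K) ≠ 0 := by simpa using hp.ne_zero
  obtain ⟨b', hb'⟩ : ∃ b' : O, (b' : K) = (polar Q x y)⁻¹ :=
    ⟨⟨_, inv_mem_of_inv_mul_notMem hp hb⟩, rfl⟩
  have hc : p * (b' ^ 2 * ⟨_, hx⟩ * ⟨Q y, hy⟩) ∈ IsLocalRing.maximalIdeal O :=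
    Ideal.mul_mem_right _ _ hp.not_isUnit
  refine hb0 (polar_eq_zero_of_anisotropic hQ hc ?_)
  push_cast
  rw [hb']
  field_simp

theorem IsMaximalLattice.mem_iff_of_anisotropic {M : Submodule O V} (hM : IsMaximalLattice Q M)
    (hQ : Q.Anisotropic) {x : V} : x ∈ M ↔ Q x ∈ O :=
  ⟨hM.map_mem x, fun hx ↦ hM.mem_of_integral x hx fun y hy ↦
    polar_mem_of_anisotropic hQ hx (hM.map_mem y hy)⟩

theorem map_add_mem_iff_of_anisotropic (hQ : Q.Anisotropic) {x y : V} (hy : Q y ∈ O) :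
    Q (x + y) ∈ O ↔ Q x ∈ O := by
  have add_mem {x y} (hx : Q x ∈ O) (hy : Q y ∈ O) : Q (x + y) ∈ O := by
    rw [QuadraticMap.map_add Q]
    exact O.add_mem (O.add_mem hx hy) (polar_mem_of_anisotropic hQ hx hy)
  refine ⟨fun h ↦ ?_, fun h ↦ add_mem h hy⟩
  rw [← add_neg_cancel_right x y]
  exact add_mem h ((QuadraticMap.map_neg Q y).symm ▸ hy)

end Anisotropic

theorem anisotropic_smul {Q : QuadraticForm K V} (hQ : Q.Anisotropic) {c : K} (hc : c ≠ 0) :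
    (c • Q).Anisotropic :=
  fun x hx ↦ hQ x ((mul_eq_zero.1 hx).resolve_left hc)

theorem nondeg_of_anisotropic (h2 : (2 : K) ≠ 0) {Q : QuadraticForm K V} (hQ : Q.Anisotropic) :
    Nondeg Q := fun x hx ↦ hQ x <| by
  have h0 := hx x
  rw [QuadraticMap.polar_self, nsmul_eq_mul, Nat.cast_ofNat] at h0
  exact (mul_eq_zero.1 h0).resolve_left h2

section Isometries

variable {W : Type} [AddCommGroup W] [Module K W] {Q : QuadraticForm K V} {Q' : QuadraticForm K W}

theorem polar_apply_of_isometry (σ : W →ₗ[K] V) (hσ : ∀ x, Q (σ x) = Q' x) (x y : W) :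
    polar Q (σ x) (σ y) = polar Q' x y := by
  simp only [polar, ← map_add, hσ]

theorem injective_of_isometry (hQ' : Nondeg Q') (σ : W →ₗ[K] V) (hσ : ∀ x, Q (σ x) = Q' x) :
    Function.Injective σ :=
  (injective_iff_map_eq_zero σ).2 fun x hx ↦ hQ' x fun y ↦ by
    rw [← polar_apply_of_isometry σ hσ, hx, polar_zero_left]

theorem Nondeg.of_isometryEquiv (hQ : Nondeg Q) (e : Q.IsometryEquiv Q') : Nondeg Q' :=
  fun x hx ↦ by
    have h0 : e.symm x = 0 := hQ _ fun y ↦ by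
      rw [← polar_apply_of_isometry e.toLinearEquiv.toLinearMap e.map_app]
      simpa using hx (e y)
    simpa using congrArg e h0

theorem anisotropic_of_isometryEquiv (hQ : Q.Anisotropic) (e : Q.IsometryEquiv Q') :
    Q'.Anisotropic := fun x hx ↦ by
  simpa using congrArg e (hQ (e.symm x) ((e.symm.map_app x).trans hx))

end Isometries

/-- The restriction of a quadratic form to a subspace. -/
abbrev restrictForm (Q : QuadraticForm K V) (U : Submodule K V) : QuadraticForm K U :=
  Q.comp U.subtype

/-- The part of a lattice lying in a subspace, as a submodule of that subspace. -/
abbrev restrictLattice (M : Submodule O V) (U : Submodule K V) : Submodule O U :=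
  M.comap (U.subtype.restrictScalars O)

theorem fg_comap_of_injective [IsNoetherianRing O] {W : Type} [AddCommGroup W] [Module O W]
    {M : Submodule O V} (hM : M.FG) {f : W →ₗ[O] V} (hf : Function.Injective f) :
    (M.comap f).FG := by
  have : IsNoetherian O M := isNoetherian_of_fg_of_noetherian M hM
  have hinj : Function.Injective (f.restrict (p := M.comap f) (q := M) fun _ hx ↦ hx) :=
    fun x y h ↦ Subtype.ext (hf (congrArg Subtype.val h))
  exact Module.Finite.iff_fg.1
    (@Module.IsNoetherian.finite _ _ _ _ _ (isNoetherian_of_injective _ hinj))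

theorem IsIntegralLattice.restrict [IsFractionRing O K] [IsNoetherianRing O]
    {Q : QuadraticForm K V} {M : Submodule O V} (hM : IsIntegralLattice Q M) (U : Submodule K V) :
    IsIntegralLattice (restrictForm Q U) (restrictLattice M U) where
  fg := fg_comap_of_injective hM.fg U.subtype_injective
  span_eq_top := span_eq_top_of_forall_exists_smul_mem fun u ↦
    exists_smul_mem_of_span_eq_top hM.span_eq_top (u : V)
  map_mem _ hu := hM.map_mem _ hu

/-- The hyperbolic plane over `K`: the form `(a, b) ↦ a * b`. -/
def hyperbolicPlane (K : Type) [Field K] : QuadraticForm K (K × K) :=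
  linMulLin (LinearMap.fst K K K) (LinearMap.snd K K K)

theorem hyperbolicPlane_apply (w : K × K) : hyperbolicPlane K w = w.1 * w.2 := rfl

theorem polar_hyperbolicPlane (v w : K × K) :
    polar (hyperbolicPlane K) v w = v.1 * w.2 + v.2 * w.1 := by
  simp only [polar, hyperbolicPlane_apply, Prod.fst_add, Prod.snd_add]
  ring

/-- The orthogonal complement of two vectors of a quadratic space. -/
def pairComplement (Q : QuadraticForm K V) (x y : V) : Submodule K V :=
  LinearMap.ker (polarBilin Q x) ⊓ LinearMap.ker (polarBilin Q y)

theorem mem_pairComplement {Q : QuadraticForm K V} {x y u : V} :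
    u ∈ pairComplement Q x y ↔ polar Q x u = 0 ∧ polar Q y u = 0 := by
  simp [pairComplement]

/-- Two isotropic vectors `x`, `y` with `polar Q x y = 1`; they span a hyperbolic plane. -/
structure IsHyperbolicPair (Q : QuadraticForm K V) (x y : V) : Prop where
  map_left : Q x = 0
  map_right : Q y = 0
  polar_eq_one : polar Q x y = 1

namespace IsHyperbolicPair

variable {Q : QuadraticForm K V} {x y : V} (h : IsHyperbolicPair Q x y)
include h

theorem polar_swap : polar Q y x = 1 := (polar_comm Q y x).trans h.polar_eq_one

theorem polar_left_self : polar Q x x = 0 := by rw [QuadraticMap.polar_self, h.map_left, smul_zero]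

theorem polar_right_self : polar Q y y = 0 := by
  rw [QuadraticMap.polar_self, h.map_right, smul_zero]

/-- The orthogonal projection onto the complement of a hyperbolic pair. -/
def proj : V →ₗ[K] pairComplement Q x y :=
  LinearMap.codRestrict (pairComplement Q x y)
    (LinearMap.id - (polarBilin Q y).smulRight x - (polarBilin Q x).smulRight y) fun v ↦ by
      simp [mem_pairComplement, polar_sub_right, polar_smul_right, h.polar_left_self,
        h.polar_right_self, h.polar_eq_one, h.polar_swap]

theorem coe_proj (v : V) : (h.proj v : V) = v - polar Q y v • x - polar Q x v • y := rfl

/-- Splitting off the hyperbolic plane spanned by a hyperbolic pair. -/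
def isometryEquiv :
    ((hyperbolicPlane K).prod (restrictForm Q (pairComplement Q x y))).IsometryEquiv Q where
  toFun w := w.1.1 • x + w.1.2 • y + w.2
  map_add' w w' := by simp only [Prod.fst_add, Prod.snd_add, add_smul, Submodule.coe_add]; abel
  map_smul' a w := by simp [smul_smul, smul_add]
  invFun v := ((polar Q y v, polar Q x v), h.proj v)
  left_inv := by
    rintro ⟨⟨a, b⟩, u⟩
    obtain ⟨hxu, hyu⟩ := mem_pairComplement.1 u.2
    have hy : polar Q y (a • x + b • y + u) = a := by
      simp [polar_add_right, polar_smul_right, h.polar_swap, h.polar_right_self, hyu]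
    have hx : polar Q x (a • x + b • y + u) = b := by
      simp [polar_add_right, polar_smul_right, h.polar_eq_one, h.polar_left_self, hxu]
    ext1
    · exact Prod.ext hy hx
    · ext1
      rw [coe_proj, hx, hy]
      module
  right_inv v := by
    simp only [coe_proj]
    abel
  map_app' := by
    rintro ⟨⟨a, b⟩, u⟩
    obtain ⟨hxu, hyu⟩ := mem_pairComplement.1 u.2
    simp [QuadraticMap.map_add Q, QuadraticMap.map_smul, polar_add_left, polar_smul_left,
      polar_smul_right, hxu, hyu, h.map_left, h.map_right, h.polar_eq_one, hyperbolicPlane_apply,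
      mul_comm]

theorem isometryEquiv_apply (w : (K × K) × pairComplement Q x y) :
    h.isometryEquiv w = w.1.1 • x + w.1.2 • y + w.2 := rfl

theorem isometryEquiv_symm_apply (v : V) :
    h.isometryEquiv.symm v = ((polar Q y v, polar Q x v), h.proj v) := rfl

theorem finrank_pairComplement_add_two [FiniteDimensional K V] :
    Module.finrank K (pairComplement Q x y) + 2 = Module.finrank K V := by
  rw [← h.isometryEquiv.toLinearEquiv.finrank_eq, Module.finrank_prod, Module.finrank_prod,
    Module.finrank_self, add_comm]

theorem polar_coe_left (u : pairComplement Q x y) (v : V) :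
    polar Q u v = polar (restrictForm Q (pairComplement Q x y)) u (h.proj v) := by
  have hu : h.isometryEquiv (0, u) = u := by simp [isometryEquiv_apply]
  calc polar Q u v
      = polar Q (h.isometryEquiv (0, u)) (h.isometryEquiv (h.isometryEquiv.symm v)) := by
        rw [h.isometryEquiv.apply_symm_apply, hu]
    _ = polar ((hyperbolicPlane K).prod (restrictForm Q _)) (0, u) (h.isometryEquiv.symm v) :=
        polar_apply_of_isometry h.isometryEquiv.toLinearEquiv.toLinearMap h.isometryEquiv.map_app ..
    _ = polar (restrictForm Q (pairComplement Q x y)) u (h.proj v) := by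
        rw [polar_prod, polar_zero_left, zero_add]
        rfl

theorem nondeg_restrictForm (hQ : Nondeg Q) : Nondeg (restrictForm Q (pairComplement Q x y)) :=
  fun u hu ↦ Subtype.ext <| hQ _ fun v ↦ by rw [h.polar_coe_left, hu]

variable {M : Submodule O V}

theorem isometryEquiv_mem_iff (hM : ∀ v ∈ M, Q v ∈ O) (hx : x ∈ M) (hy : y ∈ M)
    (w : (K × K) × pairComplement Q x y) :
    h.isometryEquiv w ∈ M ↔ (w.1.1 ∈ O ∧ w.1.2 ∈ O) ∧ w.2 ∈ restrictLattice M _ := by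
  have hsum (h1 : w.1.1 ∈ O) (h2 : w.1.2 ∈ O) : w.1.1 • x + w.1.2 • y ∈ M :=
    M.add_mem (M.smul_mem (⟨_, h1⟩ : O) hx) (M.smul_mem (⟨_, h2⟩ : O) hy)
  constructor
  · intro hw
    have h1 : w.1 = (polar Q y (h.isometryEquiv w), polar Q x (h.isometryEquiv w)) :=
      congrArg Prod.fst (h.isometryEquiv.symm_apply_apply w).symm
    have h3 : w.1.1 ∈ O := by rw [h1]; exact polar_mem hM hy hw
    have h4 : w.1.2 ∈ O := by rw [h1]; exact polar_mem hM hx hw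
    exact ⟨⟨h3, h4⟩, (M.add_mem_iff_right (hsum h3 h4)).1 hw⟩
  · rintro ⟨⟨h1, h2⟩, h3⟩
    exact M.add_mem (hsum h1 h2) h3

theorem isMaximalLattice_restrict [IsFractionRing O K] [IsNoetherianRing O]
    (hM : IsMaximalLattice Q M) (hx : x ∈ M) (hy : y ∈ M) :
    IsMaximalLattice (restrictForm Q (pairComplement Q x y)) (restrictLattice M _) where
  toIsIntegralLattice := hM.toIsIntegralLattice.restrict _
  mem_of_integral u hu huM := hM.mem_of_integral u hu fun v hv ↦ by
    rw [h.polar_coe_left]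
    refine huM _ ((h.isometryEquiv_mem_iff hM.map_mem hx hy (h.isometryEquiv.symm v)).1 ?_).2
    rwa [h.isometryEquiv.apply_symm_apply]

end IsHyperbolicPair

section PrincipalIdeal

variable [IsFractionRing O K] [IsPrincipalIdealRing O]

theorem exists_generator_of_fg {I : Submodule O K} (hI : I.FG) :
    ∃ a : K, I = Submodule.span O {a} :=
  (FractionalIdeal.isPrincipal (⟨I, FractionalIdeal.isFractional_of_fg hI⟩ :
    FractionalIdeal (nonZeroDivisors O) K)).principal

theorem exists_primitive_smul {M : Submodule O V} (hfg : M.FG)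
    (hM : Submodule.span K (M : Set V) = ⊤) {x : V} (hx : x ≠ 0) :
    ∃ a : K, a ≠ 0 ∧ a • x ∈ M ∧ ∀ b : K, b • a • x ∈ M → b ∈ O := by
  have hinj : Function.Injective ((LinearMap.toSpanSingleton K V x).restrictScalars O) :=
    smul_left_injective K hx
  obtain ⟨a, ha⟩ := exists_generator_of_fg (fg_comap_of_injective hfg hinj)
  have mem_iff (b : K) : b • x ∈ M ↔ ∃ c : O, c • a = b := by
    rw [← Submodule.mem_span_singleton, ← ha]; rfl
  obtain ⟨c, hc, hcx⟩ := exists_smul_mem_of_span_eq_top hM x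
  have ha0 : a ≠ 0 := by
    rintro rfl
    obtain ⟨d, hd⟩ := (mem_iff c).1 hcx
    exact hc (Subtype.ext (hd.symm.trans (smul_zero d)))
  refine ⟨a, ha0, (mem_iff a).2 ⟨1, one_smul O a⟩, fun b hb ↦ ?_⟩
  rw [smul_smul, mem_iff] at hb
  obtain ⟨d, hd⟩ := hb
  exact mul_right_cancel₀ ha0 hd ▸ d.2

end PrincipalIdeal

section MaximalLattices

variable [IsFractionRing O K] [IsDiscreteValuationRing O]

theorem IsMaximalLattice.exists_isHyperbolicPair {Q : QuadraticForm K V} {M : Submodule O V}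
    (hM : IsMaximalLattice Q M) {x₀ : V} (hx₀ : x₀ ≠ 0) (hQx₀ : Q x₀ = 0) :
    ∃ (a : K) (y : V), a ≠ 0 ∧ a • x₀ ∈ M ∧ y ∈ M ∧ IsHyperbolicPair Q (a • x₀) y := by
  obtain ⟨p, hp⟩ := IsDiscreteValuationRing.exists_irreducible O
  obtain ⟨a, ha, hx, hprim⟩ := exists_primitive_smul hM.fg hM.span_eq_top hx₀
  have hQx : Q (a • x₀) = 0 := by rw [QuadraticMap.map_smul, hQx₀, smul_zero]
  set x := a • x₀
  obtain ⟨m, hm, hpm⟩ : ∃ m ∈ M, (p : K)⁻¹ * polar Q x m ∉ O := by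
    by_contra! hcon
    refine inv_notMem_of_irreducible hp (hprim _ (hM.mem_of_integral _ ?_ fun m hm ↦ ?_))
    · rw [QuadraticMap.map_smul, hQx, smul_zero]
      exact O.zero_mem
    · rw [polar_smul_left]
      exact hcon m hm
  have hxm0 : polar Q x m ≠ 0 := fun h ↦ hpm (by rw [h, mul_zero]; exact O.zero_mem)
  obtain ⟨m', hm', hxm'⟩ : ∃ m' ∈ M, polar Q x m' = 1 :=
    ⟨(polar Q x m)⁻¹ • m, M.smul_mem (⟨_, inv_mem_of_inv_mul_notMem hp hpm⟩ : O) hm, by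
      rw [polar_smul_right, smul_eq_mul, inv_mul_cancel₀ hxm0]⟩
  have hxx : polar Q x x = 0 := by rw [QuadraticMap.polar_self, hQx, smul_zero]
  refine ⟨a, m' - Q m' • x, ha, hx, M.sub_mem hm' (M.smul_mem (⟨_, hM.map_mem m' hm'⟩ : O) hx),
    hQx, ?_, ?_⟩
  · rw [sub_eq_add_neg, QuadraticMap.map_add Q, QuadraticMap.map_neg, QuadraticMap.map_smul,
      polar_neg_right, polar_smul_right, polar_comm, hQx, hxm']
    simp
  · rw [polar_sub_right, polar_smul_right, hxx, hxm', smul_zero, sub_zero]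

variable {W : Type} [AddCommGroup W] [Module K W] {Q : QuadraticForm K V} {Q' : QuadraticForm K W}

theorem exists_isometryEquiv_pairComplement [FiniteDimensional K V] [FiniteDimensional K W]
    (hQ : Nondeg Q) (e : Q.IsometryEquiv Q') {x y : V} {x' y' : W} (h : IsHyperbolicPair Q x y)
    (h' : IsHyperbolicPair Q' x' y') {a : K} (hx' : x' = a • e x) :
    Nonempty ((restrictForm Q (pairComplement Q x y)).IsometryEquiv
      (restrictForm Q' (pairComplement Q' x' y'))) := by
  let η : pairComplement Q x y →ₗ[K] pairComplement Q' x' y' :=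
    h'.proj ∘ₗ e.toLinearEquiv.toLinearMap ∘ₗ (pairComplement Q x y).subtype
  have horth (u : pairComplement Q x y) : polar Q' x' (e u) = 0 := by
    have he : polar Q' (e x) (e u) = polar Q x u :=
      polar_apply_of_isometry e.toLinearEquiv.toLinearMap e.map_app x u
    rw [hx', polar_smul_left, he, (mem_pairComplement.1 u.2).1, smul_zero]
  have hη (u) : restrictForm Q' (pairComplement Q' x' y') (η u) = restrictForm Q _ u := by
    have h1 := h'.isometryEquiv.symm.map_app (e u)
    rw [h'.isometryEquiv_symm_apply, prod_apply, hyperbolicPlane_apply, horth, mul_zero, zero_add,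
      e.map_app] at h1
    exact h1
  have hrank : Module.finrank K (pairComplement Q x y) =
      Module.finrank K (pairComplement Q' x' y') := by
    have := h.finrank_pairComplement_add_two
    have := h'.finrank_pairComplement_add_two
    have := e.toLinearEquiv.finrank_eq
    omega
  exact ⟨{ η.linearEquivOfInjective
    (injective_of_isometry (h.nondeg_restrictForm hQ) η hη) hrank with map_app' := hη }⟩

variable [HenselianLocalRing O]

theorem exists_isometryEquiv_mem_iff_of_isMaximalLattice {V W : Type} [AddCommGroup V]
    [Module K V] [FiniteDimensional K V] [AddCommGroup W] [Module K W] {Q : QuadraticForm K V}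
    {Q' : QuadraticForm K W} (hQ : Nondeg Q) (e : Q.IsometryEquiv Q') {N : Submodule O V}
    {M : Submodule O W} (hN : IsMaximalLattice Q N) (hM : IsMaximalLattice Q' M) :
    ∃ g : Q.IsometryEquiv Q', ∀ x, x ∈ N ↔ g x ∈ M := by
  induction hd : Module.finrank K V using Nat.strong_induction_on generalizing V W with
  | _ d ih =>
    have : FiniteDimensional K W := Module.Finite.equiv e.toLinearEquiv
    by_cases haniso : Q.Anisotropic
    · refine ⟨e, fun x ↦ ?_⟩
      rw [hN.mem_iff_of_anisotropic haniso,
        hM.mem_iff_of_anisotropic (anisotropic_of_isometryEquiv haniso e), e.map_app]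
    obtain ⟨x₀, hQx₀, hx₀⟩ : ∃ x, Q x = 0 ∧ x ≠ 0 := by
      simpa only [Anisotropic, not_forall, exists_prop] using haniso
    obtain ⟨a, y, ha, hx, hy, h⟩ := hN.exists_isHyperbolicPair hx₀ hQx₀
    obtain ⟨a', y', -, hx', hy', h'⟩ := hM.exists_isHyperbolicPair (x₀ := e x₀)
      (by simpa using hx₀) ((e.map_app x₀).trans hQx₀)
    have hsmul : a' • e x₀ = (a' * a⁻¹) • e (a • x₀) := by
      rw [map_smul, smul_smul, inv_mul_cancel_right₀ ha]
    obtain ⟨e'⟩ := exists_isometryEquiv_pairComplement hQ e h h' hsmul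
    have hlt : Module.finrank K (pairComplement Q (a • x₀) y) < d := by
      have := h.finrank_pairComplement_add_two
      omega
    obtain ⟨g, hg⟩ := ih _ hlt (h.nondeg_restrictForm hQ) e' (h.isMaximalLattice_restrict hN hx hy)
      (h'.isMaximalLattice_restrict hM hx' hy') rfl
    refine ⟨h.isometryEquiv.symm.trans
      ((QuadraticMap.IsometryEquiv.prod (.refl _) g).trans h'.isometryEquiv), fun v ↦ ?_⟩
    obtain ⟨w, rfl⟩ := h.isometryEquiv.toLinearEquiv.surjective v
    refine (h.isometryEquiv_mem_iff hN.map_mem hx hy w).trans ?_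
    rw [hg, ← h'.isometryEquiv_mem_iff hM.map_mem hx' hy' (w.1, g w.2)]
    have hw : h.isometryEquiv.symm (h.isometryEquiv w) = w := h.isometryEquiv.symm_apply_apply w
    exact iff_of_eq (congrArg (fun w ↦ h'.isometryEquiv (w.1, g w.2) ∈ M) hw.symm)

theorem IsMaximalLattice.isADC [FiniteDimensional K V] (hQ : Nondeg Q) {L : Submodule O V}
    (hL : IsMaximalLattice Q L) (n : ℕ) : IsADC O Q (L : Set V) n := by
  intro W _ _ Q' _ _ N hN hNint ⟨σ, hσ, hQσ⟩
  obtain ⟨N, hN', rfl⟩ := exists_isIntegralLattice_coe_eq hN hNint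
  obtain ⟨M, hNM, hM⟩ := exists_le_isMaximalLattice (N := N.map (σ.restrictScalars O)) hQ
    (hN'.fg.map _) (by
      rintro _ ⟨x, hx, rfl⟩
      exact (hQσ x).symm ▸ hN'.map_mem x hx)
  obtain ⟨g, hg⟩ := exists_isometryEquiv_mem_iff_of_isMaximalLattice hQ (.refl Q) hM hL
  refine ⟨g.toLinearEquiv.toLinearMap ∘ₗ σ, g.toLinearEquiv.injective.comp hσ,
    fun x ↦ (g.map_app _).trans (hQσ x), ?_⟩
  rintro _ ⟨x, hx, rfl⟩
  exact (hg _).1 (hNM ⟨x, hx, rfl⟩)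

end MaximalLattices

section ResidualLength

variable {p : O} {Q : QuadraticForm K V} {N : Submodule O V}

/-- The vectors of a lattice `N` which are killed by the reductions modulo `p` of both `Q` and
its polar form, i.e. the preimage in `N` of the radical of the quadratic form `Q mod p` on `N/pN`;
in residue characteristic `2` the condition on `Q` does not follow from the one on the polar
form. -/
def residualRadical (p : O) (Q : QuadraticForm K V) (N : Submodule O V) : Submodule O N where
  carrier := {x | (p : K)⁻¹ * Q x ∈ O ∧ ∀ y ∈ N, (p : K)⁻¹ * polar Q x y ∈ O}
  zero_mem' := by simp [O.zero_mem]
  add_mem' {x y} hx hy := by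
    refine ⟨?_, fun z hz ↦ ?_⟩
    · rw [Submodule.coe_add, QuadraticMap.map_add Q, mul_add, mul_add]
      exact O.add_mem (O.add_mem hx.1 hy.1) (hx.2 y y.2)
    · rw [Submodule.coe_add, polar_add_left, mul_add]
      exact O.add_mem (hx.2 z hz) (hy.2 z hz)
  smul_mem' a x hx := by
    refine ⟨?_, fun z hz ↦ ?_⟩
    · rw [Submodule.coe_smul, QuadraticMap.map_smul_of_tower, mul_smul_comm]
      exact O.mul_mem (a * a).2 hx.1
    · rw [Submodule.coe_smul, polar_smul_left_of_tower, mul_smul_comm]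
      exact O.mul_mem a.2 (hx.2 z hz)

/-- The dimension over the residue field of the nonsingular part of `Q mod p` on `N/pN`, expressed
as the length of `N` modulo its residual radical. For a maximal lattice this is an invariant of the
quadratic space. -/
def residualLength (p : O) (Q : QuadraticForm K V) (N : Submodule O V) : ℕ∞ :=
  Module.length O (N ⧸ residualRadical p Q N)

theorem mem_residualRadical {x : N} : x ∈ residualRadical p Q N ↔
    (p : K)⁻¹ * Q x ∈ O ∧ ∀ y ∈ N, (p : K)⁻¹ * polar Q x y ∈ O := Iff.rfl

theorem smul_mem_residualRadical (hp : p ≠ 0) (hN : ∀ x ∈ N, Q x ∈ O) (x : N) :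
    p • x ∈ residualRadical p Q N := by
  have hp' : (p : K) ≠ 0 := by simpa using hp
  refine ⟨?_, fun y hy ↦ ?_⟩
  · rw [Submodule.coe_smul, QuadraticMap.map_smul_of_tower, Subring.smul_def, Subring.coe_mul,
      smul_eq_mul, mul_assoc, inv_mul_cancel_left₀ hp']
    exact O.mul_mem p.2 (hN _ x.2)
  · rw [Submodule.coe_smul, polar_smul_left_of_tower, Subring.smul_def, smul_eq_mul,
      inv_mul_cancel_left₀ hp']
    exact polar_mem hN x.2 hy

theorem length_eq_of_surjective_of_ker_eq {R D T T' : Type} [Ring R] [AddCommGroup D]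
    [AddCommGroup T] [AddCommGroup T'] [Module R D] [Module R T] [Module R T'] {g : D →ₗ[R] T}
    {g' : D →ₗ[R] T'} (hg : Function.Surjective g) (hg' : Function.Surjective g')
    (hker : LinearMap.ker g = LinearMap.ker g') : Module.length R T = Module.length R T' :=
  ((g.quotKerEquivOfSurjective hg).symm ≪≫ₗ Submodule.quotEquivOfEq _ _ hker ≪≫ₗ
    g'.quotKerEquivOfSurjective hg').length_eq

theorem residualLength_eq_of_surjective {D T : Type} [AddCommGroup D] [Module O D]
    [AddCommGroup T] [Module O T] (φ : D →ₗ[O] N) (g : D →ₗ[O] T) (hg : Function.Surjective g)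
    (hφ : ∀ x, ∃ d, x - φ d ∈ residualRadical p Q N)
    (hker : ∀ d, φ d ∈ residualRadical p Q N ↔ g d = 0) :
    residualLength p Q N = Module.length O T := by
  refine length_eq_of_surjective_of_ker_eq (g := (residualRadical p Q N).mkQ ∘ₗ φ) ?_ hg ?_
  · intro t
    obtain ⟨x, rfl⟩ := Submodule.mkQ_surjective _ t
    obtain ⟨d, hd⟩ := hφ x
    exact ⟨d, ((Submodule.Quotient.eq _).2 hd).symm⟩
  · ext d
    simp [hker]

end ResidualLength

section DVR

variable [IsDiscreteValuationRing O] {p : O} {Q : QuadraticForm K V} {N : Submodule O V}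

theorem isSimpleModule_quotient_span_of_irreducible (hp : Irreducible p) :
    IsSimpleModule O (O ⧸ Ideal.span {p}) := by
  rw [isSimpleModule_iff_isCoatom, ← Ideal.isMaximal_def, ← hp.maximalIdeal_eq]
  infer_instance

theorem residualLength_ne_top (hp : Irreducible p) (hfg : N.FG) (hN : ∀ x ∈ N, Q x ∈ O) :
    residualLength p Q N ≠ ⊤ := by
  have := isSimpleModule_quotient_span_of_irreducible hp
  have : Module.Finite O N := Module.Finite.iff_fg.2 hfg
  obtain ⟨s, f, hf⟩ := Module.Finite.exists_fin' O N
  let I : Submodule O (Fin s → O) := Submodule.pi Set.univ fun _ ↦ Ideal.span {p}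
  have hI : I ≤ LinearMap.ker ((residualRadical p Q N).mkQ ∘ₗ f) := fun a ha ↦ by
    choose c hc using fun i ↦ Ideal.mem_span_singleton.1 (ha i trivial)
    have hac : a = p • c := funext hc
    rw [LinearMap.mem_ker, LinearMap.comp_apply, hac, map_smul, Submodule.mkQ_apply,
      Submodule.Quotient.mk_eq_zero]
    exact smul_mem_residualRadical hp.ne_zero hN (f c)
  have hsurj : Function.Surjective (I.liftQ _ hI) :=
    ((Submodule.mkQ_surjective _).comp hf).of_comp (g := I.mkQ)
  refine ne_top_of_le_ne_top ?_ (Module.length_le_of_surjective _ hsurj)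
  rw [(Submodule.quotientPi _).length_eq, Module.length_pi_of_fintype]
  simp [Module.length_eq_one]

end DVR

section AnisotropicResidualLength

variable [IsFractionRing O K] [IsDiscreteValuationRing O] [HenselianLocalRing O]
  {W : Type} [AddCommGroup W] [Module K W] {Q : QuadraticForm K V} {Q' : QuadraticForm K W}

theorem map_zero_prod (Q : QuadraticForm K V) (e : (W × K) ≃ₗ[K] V) (t : K) :
    Q (e (0, t)) = t * t * Q (e (0, 1)) := by
  have h0 : e (0, t) = t • e (0, 1) := by simp [← map_smul]
  rw [h0, QuadraticMap.map_smul, smul_eq_mul]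

theorem map_prod_mem_iff_of_anisotropic (hQ : Q.Anisotropic) (e : (W × K) ≃ₗ[K] V)
    (he : ∀ u, Q (e (u, 0)) = Q' u) {t : K} (ht : Q (e (0, t)) ∈ O) (u : W) :
    Q (e (u, t)) ∈ O ↔ Q' u ∈ O := by
  have hut : e (u, t) = e (u, 0) + e (0, t) := by simp [← map_add]
  rw [hut, map_add_mem_iff_of_anisotropic hQ ht, he]

theorem anisotropic_of_forall_map_eq (hQ : Q.Anisotropic) (e : (W × K) ≃ₗ[K] V)
    (he : ∀ u, Q (e (u, 0)) = Q' u) : Q'.Anisotropic := fun u hu ↦ by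
  simpa using hQ _ ((he u).trans hu)

variable {p : O} {N : Submodule O V} {N' : Submodule O W}

theorem IsMaximalLattice.mem_residualRadical_iff (hp : Irreducible p) (hQ : Q.Anisotropic)
    (hN : IsMaximalLattice Q N) {x : N} :
    x ∈ residualRadical p Q N ↔ (p : K)⁻¹ * Q x ∈ O :=
  ⟨And.left, fun hx ↦ ⟨hx, fun y hy ↦
    inv_mul_polar_mem_of_anisotropic hp hQ hx (hN.map_mem y hy)⟩⟩

theorem residualLength_eq_of_prod (hp : Irreducible p) (hQ : Q.Anisotropic)
    (hN : IsMaximalLattice Q N) (hN' : IsMaximalLattice Q' N') (e : (W × K) ≃ₗ[K] V)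
    (he : ∀ u, Q (e (u, 0)) = Q' u) (hb : (p : K)⁻¹ * Q (e (0, 1)) ∈ O)
    (heO : ∀ u t, Q (e (u, t)) ∈ O → t ∈ O) : residualLength p Q N = residualLength p Q' N' := by
  have hQ' := anisotropic_of_forall_map_eq hQ e he
  have hφ (u : N') : Q (e (u, 0)) ∈ O := he u ▸ hN'.map_mem u u.2
  let φ : N' →ₗ[O] N := (e.toLinearMap ∘ₗ LinearMap.inl K W K).restrictScalars O |>.restrict
    fun u hu ↦ (hN.mem_iff_of_anisotropic hQ).2 (hφ ⟨u, hu⟩)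
  refine residualLength_eq_of_surjective φ (residualRadical p Q' N').mkQ
    (Submodule.mkQ_surjective _) (fun x ↦ ?_) fun u ↦ ?_
  · obtain ⟨⟨u, t⟩, hx⟩ := e.surjective x
    have hxO : Q (e (u, t)) ∈ O := hx ▸ hN.map_mem x x.2
    have ht : (p : K)⁻¹ * Q (e (0, t)) ∈ O := by
      rw [map_zero_prod, mul_left_comm]
      exact O.mul_mem (O.mul_mem (heO u t hxO) (heO u t hxO)) hb
    have hu : u ∈ N' := (hN'.mem_iff_of_anisotropic hQ').2 <|
      (map_prod_mem_iff_of_anisotropic hQ e he (mem_of_inv_mul_mem hp.ne_zero ht) u).1 hxO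
    have hsub : ((x - φ ⟨u, hu⟩ : N) : V) = e (0, t) := by
      change (x : V) - e (u, 0) = _
      rw [← hx, ← map_sub, Prod.mk_sub_mk, sub_self, sub_zero]
    exact ⟨⟨u, hu⟩, (hN.mem_residualRadical_iff hp hQ).2 (hsub ▸ ht)⟩
  · rw [hN.mem_residualRadical_iff hp hQ, Submodule.mkQ_apply, Submodule.Quotient.mk_eq_zero,
      hN'.mem_residualRadical_iff hp hQ']
    exact iff_of_eq (congrArg (fun a ↦ (p : K)⁻¹ * a ∈ O) (he u))

theorem inv_mul_map_prod_mem_iff (hp : Irreducible p) (hQ : Q.Anisotropic)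
    (e : (W × K) ≃ₗ[K] V) (he : ∀ u, Q (e (u, 0)) = Q' u) (hb : Q (e (0, 1)) ∈ O)
    (heO : ∀ u t, (p : K)⁻¹ * Q (e (u, t)) ∈ O → (p : K)⁻¹ * t ∈ O) (u : W) (t : O) :
    (p : K)⁻¹ * Q (e (u, (t : K))) ∈ O ↔ (p : K)⁻¹ * Q' u ∈ O ∧ p ∣ t := by
  have hp0 : (p : K) ≠ 0 := by simpa using hp.ne_zero
  have hdvd : p ∣ t → ((p : K)⁻¹ * Q (e (u, (t : K))) ∈ O ↔ (p : K)⁻¹ * Q' u ∈ O) := by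
    rintro ⟨a, rfl⟩
    refine map_prod_mem_iff_of_anisotropic (Q := (p : K)⁻¹ • Q) (Q' := (p : K)⁻¹ • Q')
      (anisotropic_smul hQ (inv_ne_zero hp0)) e (fun u ↦ congrArg ((p : K)⁻¹ * ·) (he u)) ?_ u
    rw [smul_apply, smul_eq_mul, map_zero_prod, Subring.coe_mul, mul_assoc, mul_assoc,
      inv_mul_cancel_left₀ hp0]
    exact O.mul_mem a.2 (O.mul_mem (p * a).2 hb)
  refine ⟨fun h ↦ ?_, fun h ↦ (hdvd h.2).2 h.1⟩
  have hpt : p ∣ t := (inv_mul_coe_mem_iff_dvd hp.ne_zero).1 (heO _ _ h)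
  exact ⟨(hdvd hpt).1 h, hpt⟩

theorem residualLength_eq_add_one_of_prod (hp : Irreducible p) (hQ : Q.Anisotropic)
    (hN : IsMaximalLattice Q N) (hN' : IsMaximalLattice Q' N') (e : (W × K) ≃ₗ[K] V)
    (he : ∀ u, Q (e (u, 0)) = Q' u) (hb : Q (e (0, 1)) ∈ O)
    (heO : ∀ u t, (p : K)⁻¹ * Q (e (u, t)) ∈ O → (p : K)⁻¹ * t ∈ O) :
    residualLength p Q N = residualLength p Q' N' + 1 := by
  have hp0 : (p : K) ≠ 0 := by simpa using hp.ne_zero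
  have hQ' := anisotropic_of_forall_map_eq hQ e he
  have mem_iff (u : W) (t : O) : e (u, (t : K)) ∈ N ↔ u ∈ N' := by
    rw [hN.mem_iff_of_anisotropic hQ, hN'.mem_iff_of_anisotropic hQ']
    exact map_prod_mem_iff_of_anisotropic hQ e he (map_zero_prod Q e t ▸ O.mul_mem (t * t).2 hb) u
  have := isSimpleModule_quotient_span_of_irreducible hp
  rw [residualLength.eq_1 p Q' N', ← Module.length_eq_one O (O ⧸ Ideal.span {p}),
    ← Module.length_prod]
  let φ : N' × O →ₗ[O] N := LinearMap.codRestrict N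
    (e.toLinearMap.restrictScalars O ∘ₗ N'.subtype.prodMap (Algebra.linearMap O K))
    fun d ↦ (mem_iff d.1 d.2).2 d.1.2
  refine residualLength_eq_of_surjective φ
    ((residualRadical p Q' N').mkQ.prodMap (Ideal.span {p}).mkQ)
    ((Submodule.mkQ_surjective _).prodMap (Submodule.mkQ_surjective _)) (fun x ↦ ?_) fun d ↦ ?_
  · obtain ⟨⟨u, t⟩, hx⟩ := e.surjective x
    have ht : t ∈ O := by
      rw [← inv_mul_cancel_left₀ hp0 t]
      refine heO ((p : K) • u) _ ?_
      rw [← smul_eq_mul (p : K), ← Prod.smul_mk, map_smul, hx, QuadraticMap.map_smul, smul_eq_mul,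
        mul_assoc, inv_mul_cancel_left₀ hp0]
      exact O.mul_mem p.2 (hN.map_mem x x.2)
    have hu : u ∈ N' := (mem_iff u ⟨t, ht⟩).1 (hx ▸ x.2)
    have hsub : x - φ (⟨u, hu⟩, ⟨t, ht⟩) = 0 := sub_eq_zero.2 (Subtype.ext hx.symm)
    exact ⟨(⟨u, hu⟩, ⟨t, ht⟩), hsub ▸ zero_mem _⟩
  · rw [hN.mem_residualRadical_iff hp hQ, LinearMap.prodMap_apply, Prod.mk_eq_zero,
      Submodule.mkQ_apply, Submodule.mkQ_apply, Submodule.Quotient.mk_eq_zero,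
      Submodule.Quotient.mk_eq_zero, hN'.mem_residualRadical_iff hp hQ', Ideal.mem_span_singleton]
    exact inv_mul_map_prod_mem_iff hp hQ e he hb heO d.1 d.2

end AnisotropicResidualLength

section HyperbolicSum

variable {p : O} {Q : QuadraticForm K V} {N : Submodule O V}

/-- The lattice `(O ⊕ O) ⊕ N` on `(K ⊕ K) ⊕ V`. -/
def hyperbolicSum (N : Submodule O V) : Submodule O ((K × K) × V) :=
  (Submodule.prod 1 1).prod N

theorem mem_hyperbolicSum {w : (K × K) × V} :
    w ∈ hyperbolicSum N ↔ (w.1.1 ∈ O ∧ w.1.2 ∈ O) ∧ w.2 ∈ N := by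
  have h1 (a : K) : a ∈ (1 : Submodule O K) ↔ a ∈ O :=
    Submodule.mem_one.trans ⟨fun ⟨b, hb⟩ ↦ hb ▸ b.2, fun ha ↦ ⟨⟨a, ha⟩, rfl⟩⟩
  rw [← h1, ← h1]
  rfl

theorem hyperbolicPlane_prod_apply (w : (K × K) × V) :
    (hyperbolicPlane K).prod Q w = w.1.1 * w.1.2 + Q w.2 := rfl

theorem polar_hyperbolicPlane_prod (w w' : (K × K) × V) :
    polar ((hyperbolicPlane K).prod Q) w w' =
      w.1.1 * w'.1.2 + w.1.2 * w'.1.1 + polar Q w.2 w'.2 := by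
  rw [polar_prod, polar_hyperbolicPlane, mul_comm w.1.2]

theorem IsMaximalLattice.hyperbolicSum [IsFractionRing O K] (hN : IsMaximalLattice Q N) :
    IsMaximalLattice ((hyperbolicPlane K).prod Q) (hyperbolicSum N) where
  fg := by
    have h1 : (1 : Submodule O K).FG := Submodule.one_eq_span (R := O) (A := K) ▸
      Submodule.fg_span_singleton 1
    exact (h1.prod h1).prod hN.fg
  span_eq_top := span_eq_top_of_forall_exists_smul_mem fun ⟨⟨a, b⟩, u⟩ ↦ by
    obtain ⟨c, hc, hca⟩ := exists_mul_mem (O := O) a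
    obtain ⟨d, hd, hdb⟩ := exists_mul_mem (O := O) b
    obtain ⟨e, he, heu⟩ := exists_smul_mem_of_span_eq_top hN.span_eq_top u
    refine ⟨c * d * e, by simp [hc, hd, he], mem_hyperbolicSum.2 ⟨⟨?_, ?_⟩, ?_⟩⟩
    · convert O.mul_mem (d * e).2 hca using 1
      change ((c * d * e : O) : K) * a = _
      push_cast
      ring
    · convert O.mul_mem (c * e).2 hdb using 1
      change ((c * d * e : O) : K) * b = _
      push_cast
      ring
    · change (c * d * e) • u ∈ N
      exact mul_smul (c * d) e u ▸ N.smul_mem (c * d) heu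
  map_mem w hw := by
    obtain ⟨⟨h1, h2⟩, h3⟩ := mem_hyperbolicSum.1 hw
    exact O.add_mem (O.mul_mem h1 h2) (hN.map_mem _ h3)
  mem_of_integral w hw hwN := by
    have hpol (w') (hw' : w' ∈ QLat.hyperbolicSum N) :
        w.1.1 * w'.1.2 + w.1.2 * w'.1.1 + polar Q w.2 w'.2 ∈ O :=
      polar_hyperbolicPlane_prod (Q := Q) w w' ▸ hwN w' hw'
    have h1 : w.1.1 ∈ O := by
      simpa using hpol ((0, 1), 0) (mem_hyperbolicSum.2 ⟨⟨O.zero_mem, O.one_mem⟩, N.zero_mem⟩)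
    have h2 : w.1.2 ∈ O := by
      simpa using hpol ((1, 0), 0) (mem_hyperbolicSum.2 ⟨⟨O.one_mem, O.zero_mem⟩, N.zero_mem⟩)
    refine mem_hyperbolicSum.2 ⟨⟨h1, h2⟩, hN.mem_of_integral _ ?_ fun y hy ↦ ?_⟩
    · exact (add_mem_cancel_left (O.mul_mem h1 h2)).1 hw
    · simpa using hpol (0, y) (mem_hyperbolicSum.2 ⟨⟨O.zero_mem, O.zero_mem⟩, hy⟩)

theorem mem_residualRadical_hyperbolicSum (hp : p ≠ 0) {a b : O} {x : N}
    (h : (((a : K), (b : K)), (x : V)) ∈ hyperbolicSum N) :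
    ⟨((a, b), x), h⟩ ∈ residualRadical p ((hyperbolicPlane K).prod Q) (hyperbolicSum N) ↔
      (p ∣ a ∧ p ∣ b) ∧ x ∈ residualRadical p Q N := by
  rw [← inv_mul_coe_mem_iff_dvd hp, ← inv_mul_coe_mem_iff_dvd hp]
  have map_iff (ha : (p : K)⁻¹ * a ∈ O) :
      (p : K)⁻¹ * (hyperbolicPlane K).prod Q ((a, b), x) ∈ O ↔ (p : K)⁻¹ * Q x ∈ O := by
    rw [hyperbolicPlane_prod_apply, mul_add, ← mul_assoc]
    exact add_mem_cancel_left (O.mul_mem ha b.2)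
  simp only [mem_residualRadical, polar_hyperbolicPlane_prod, mul_add, ← mul_assoc] at map_iff ⊢
  constructor
  · rintro ⟨hQ, hpol⟩
    have ha := hpol ((0, 1), 0) (mem_hyperbolicSum.2 ⟨⟨O.zero_mem, O.one_mem⟩, N.zero_mem⟩)
    have hb := hpol ((1, 0), 0) (mem_hyperbolicSum.2 ⟨⟨O.one_mem, O.zero_mem⟩, N.zero_mem⟩)
    simp only [mul_one, mul_zero, zero_add, add_zero, polar_zero_right] at ha hb
    refine ⟨⟨ha, hb⟩, (map_iff ha).1 hQ, fun y hy ↦ ?_⟩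
    simpa using hpol (0, y) (mem_hyperbolicSum.2 ⟨⟨O.zero_mem, O.zero_mem⟩, hy⟩)
  · rintro ⟨⟨ha, hb⟩, hQ, hpol⟩
    refine ⟨(map_iff ha).2 hQ, fun y hy ↦ ?_⟩
    obtain ⟨⟨h1, h2⟩, h3⟩ := mem_hyperbolicSum.1 hy
    exact O.add_mem (O.add_mem (O.mul_mem ha h2) (O.mul_mem hb h1)) (hpol _ h3)

theorem residualLength_hyperbolicSum [IsDiscreteValuationRing O] (hp : Irreducible p) :
    residualLength p ((hyperbolicPlane K).prod Q) (hyperbolicSum N) =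
      residualLength p Q N + 2 := by
  have := isSimpleModule_quotient_span_of_irreducible hp
  have h2 : Module.length O ((O ⧸ Ideal.span {p}) × (O ⧸ Ideal.span {p})) = 2 := by
    rw [Module.length_prod, Module.length_eq_one, one_add_one_eq_two]
  rw [residualLength.eq_1 p Q N, add_comm, ← h2, ← Module.length_prod]
  let ι : O →ₗ[O] K := Algebra.linearMap O K
  let φ : (O × O) × N →ₗ[O] hyperbolicSum N := LinearMap.codRestrict _
    ((ι.prodMap ι).prodMap N.subtype) fun d ↦
      mem_hyperbolicSum.2 ⟨⟨d.1.1.2, d.1.2.2⟩, d.2.2⟩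
  let q := (Ideal.span {p}).mkQ
  refine residualLength_eq_of_surjective φ ((q.prodMap q).prodMap (residualRadical p Q N).mkQ)
    (((Submodule.mkQ_surjective _).prodMap (Submodule.mkQ_surjective _)).prodMap
      (Submodule.mkQ_surjective _)) (fun w ↦ ?_) fun d ↦ ?_
  · obtain ⟨⟨h1, h2⟩, h3⟩ := mem_hyperbolicSum.1 w.2
    have hsub : w - φ ((⟨_, h1⟩, ⟨_, h2⟩), ⟨_, h3⟩) = 0 := sub_eq_zero.2 (Subtype.ext rfl)
    exact ⟨_, hsub ▸ zero_mem _⟩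
  · rw [LinearMap.prodMap_apply, LinearMap.prodMap_apply, Prod.mk_eq_zero, Prod.mk_eq_zero]
    simp only [q, Submodule.mkQ_apply, Submodule.Quotient.mk_eq_zero, Ideal.mem_span_singleton]
    exact mem_residualRadical_hyperbolicSum hp.ne_zero (φ d).2

end HyperbolicSum

section Basis

variable [IsFractionRing O K] {M : Submodule O V}

theorem exists_basis_mem_iff [IsPrincipalIdealRing O] (hfg : M.FG)
    (hM : Submodule.span K (M : Set V) = ⊤) :
    ∃ b : Module.Basis (Fin (Module.finrank K V)) K V, ∀ x, x ∈ M ↔ ∀ i, b.repr x i ∈ O := by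
  have : Submodule.IsLattice K M := ⟨hfg, hM⟩
  have : Module.Finite O M := Module.Finite.iff_fg.2 hfg
  have : Module.Free O M := Submodule.IsLattice.free K M
  let b₀ := Module.Free.chooseBasis O M
  let b := b₀.extendOfIsLattice K
  have hspan : Submodule.span O (Set.range b) = M := by
    have hrange : Set.range b = M.subtype '' Set.range b₀ := by
      rw [← Set.range_comp]
      exact congrArg Set.range (funext (Module.Basis.extendOfIsLattice_apply K b₀))
    rw [hrange, Submodule.span_image, b₀.span_eq, Submodule.map_subtype_top]
  let e := Fintype.equivFinOfCardEq (Module.finrank_eq_card_basis b).symm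
  refine ⟨b.reindex e, fun x ↦ ?_⟩
  have hx : x ∈ M ↔ ∀ i, b.repr x i ∈ O := by
    nth_rw 1 [← hspan]
    rw [b.mem_span_iff_repr_mem O]
    exact forall_congr' fun i ↦ ⟨fun ⟨a, ha⟩ ↦ ha ▸ a.2, fun h ↦ ⟨⟨_, h⟩, rfl⟩⟩
  rw [hx, ← e.forall_congr_right]
  simp

theorem exists_functional_eq_one [IsDiscreteValuationRing O] {p : O} (hp : Irreducible p)
    (hfg : M.FG) (hM : Submodule.span K (M : Set V) = ⊤) {x : V} (hpx : (p : K)⁻¹ • x ∉ M) :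
    ∃ f : V →ₗ[K] K, f x = 1 ∧ ∀ z ∈ M, f z ∈ O := by
  obtain ⟨b, hb⟩ := exists_basis_mem_iff hfg hM
  obtain ⟨i, hi⟩ : ∃ i, (p : K)⁻¹ * b.repr x i ∉ O := by
    simpa [hb] using hpx
  have hi0 : b.repr x i ≠ 0 := fun h ↦ hi (by rw [h, mul_zero]; exact O.zero_mem)
  exact ⟨(b.repr x i)⁻¹ • b.coord i, by simp [hi0], fun z hz ↦
    O.mul_mem (inv_mem_of_inv_mul_notMem hp hi) ((hb z).1 hz i)⟩

end Basis

/-- `Q` takes a value in `O` which is not divisible by `p`. -/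
def AttainsUnit (p : O) (Q : QuadraticForm K V) : Prop :=
  ∃ x, Q x ∈ O ∧ (p : K)⁻¹ * Q x ∉ O

/-- Some maximal lattice of the quadratic space `(V, Q)` has residual length `c`. -/
def HasResidualLength (p : O) (Q : QuadraticForm K V) (c : ℕ) : Prop :=
  ∃ N : Submodule O V, IsMaximalLattice Q N ∧ residualLength p Q N = c

/-- The space `(V, Q)` represents some nondegenerate `n`-dimensional quadratic space whose maximal
lattices have residual length `c`. -/
def RepresentsResidualLength (p : O) (Q : QuadraticForm K V) (n c : ℕ) : Prop :=
  ∃ (W : Type) (_ : AddCommGroup W) (_ : Module K W) (Q' : QuadraticForm K W),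
    Nondeg Q' ∧ Module.finrank K W = n ∧ SpaceRep Q' Q ∧ HasResidualLength p Q' c

section Representations

variable {p : O} {W : Type} [AddCommGroup W] [Module K W] {Q : QuadraticForm K V}
  {Q' : QuadraticForm K W} {n c : ℕ}

theorem RepresentsResidualLength.of_isometryEquiv (h : RepresentsResidualLength p Q n c)
    (e : Q.IsometryEquiv Q') : RepresentsResidualLength p Q' n c := by
  obtain ⟨U, _, _, R, hR, hn, ⟨σ, hσ, hσR⟩, hc⟩ := h
  exact ⟨U, _, _, R, hR, hn, ⟨e.toLinearEquiv.toLinearMap ∘ₗ σ,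
    e.toLinearEquiv.injective.comp hσ, fun x ↦ (e.map_app _).trans (hσR x)⟩, hc⟩

theorem nondeg_hyperbolicPlane_prod (hQ : Nondeg Q) : Nondeg ((hyperbolicPlane K).prod Q) := by
  rintro ⟨⟨a, b⟩, x⟩ h
  simp only [polar_hyperbolicPlane_prod] at h
  have ha : a = 0 := by simpa using h ((0, 1), 0)
  have hb : b = 0 := by simpa using h ((1, 0), 0)
  rw [ha, hb, hQ x fun y ↦ by simpa using h (0, y)]
  rfl

theorem RepresentsResidualLength.hyperbolicPlane_prod [IsFractionRing O K]
    [IsDiscreteValuationRing O] [FiniteDimensional K V] (hp : Irreducible p)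
    (h : RepresentsResidualLength p Q n c) :
    RepresentsResidualLength p ((hyperbolicPlane K).prod Q) (n + 2) (c + 2) := by
  obtain ⟨U, _, _, R, hR, hn, ⟨σ, hσ, hσR⟩, N, hN, hc⟩ := h
  have : FiniteDimensional K U := Module.Finite.of_injective σ hσ
  refine ⟨_, _, _, (hyperbolicPlane K).prod R, nondeg_hyperbolicPlane_prod hR, ?_,
    ⟨LinearMap.id.prodMap σ, Function.injective_id.prodMap hσ, fun w ↦ ?_⟩,
    hyperbolicSum N, hN.hyperbolicSum, ?_⟩
  · rw [Module.finrank_prod, Module.finrank_prod, Module.finrank_self, hn, add_comm]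
  · rw [hyperbolicPlane_prod_apply, hyperbolicPlane_prod_apply]
    exact congrArg _ (hσR w.2)
  · rw [residualLength_hyperbolicSum hp, hc]
    rfl

end Representations

section Hyperplanes

variable {p : O} {Q : QuadraticForm K V}

/-- A vector `b` with `f b = 1` spans a complement to the kernel of `f`. -/
def kerProdEquiv (f : V →ₗ[K] K) {b : V} (hb : f b = 1) : (LinearMap.ker f × K) ≃ₗ[K] V where
  toFun w := w.1 + w.2 • b
  map_add' w w' := by simp only [Prod.fst_add, Prod.snd_add, Submodule.coe_add, add_smul]; abel
  map_smul' a w := by simp [smul_smul]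
  invFun v := (⟨v - f v • b, by simp [hb]⟩, f v)
  left_inv w := by ext <;> simp [hb]
  right_inv v := sub_add_cancel v _

theorem kerProdEquiv_apply (f : V →ₗ[K] K) {b : V} (hb : f b = 1) (w : LinearMap.ker f × K) :
    kerProdEquiv f hb w = w.1 + w.2 • b := rfl

theorem representsResidualLength_of_hasResidualLength_ker (h2 : (2 : K) ≠ 0)
    (hQ : Q.Anisotropic) {f : V →ₗ[K] K} {b : V} (hb : f b = 1) {n c : ℕ}
    (hn : Module.finrank K V = n + 1)
    (hc : HasResidualLength p (restrictForm Q (LinearMap.ker f)) c) :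
    RepresentsResidualLength p Q n c := by
  have : FiniteDimensional K V := Module.finite_of_finrank_pos (by omega)
  refine ⟨_, _, _, _, nondeg_of_anisotropic h2 fun u hu ↦ Subtype.ext (hQ _ hu), ?_,
    ⟨(LinearMap.ker f).subtype, Subtype.val_injective, fun _ ↦ rfl⟩, hc⟩
  rw [← (kerProdEquiv f hb).finrank_eq, Module.finrank_prod, Module.finrank_self] at hn
  omega

variable [IsFractionRing O K] [IsDiscreteValuationRing O] [FiniteDimensional K V]

theorem exists_hasResidualLength (hp : Irreducible p) (hQ : Nondeg Q) :
    ∃ c, HasResidualLength p Q c := by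
  obtain ⟨N, hN⟩ := exists_isMaximalLattice (O := O) hQ
  obtain ⟨c, hc⟩ := ENat.ne_top_iff_exists.1 (residualLength_ne_top hp hN.fg hN.map_mem)
  exact ⟨c, N, hN, hc.symm⟩

variable [HenselianLocalRing O]

theorem exists_functional_of_anisotropic (h2 : (2 : K) ≠ 0) (hp : Irreducible p)
    (hQ : Q.Anisotropic) {x : V} (hpx : Q ((p : K)⁻¹ • x) ∉ O) :
    ∃ f : V →ₗ[K] K, f x = 1 ∧ ∀ z, Q z ∈ O → f z ∈ O := by
  obtain ⟨M, hM⟩ := exists_isMaximalLattice (O := O) (nondeg_of_anisotropic h2 hQ)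
  rw [← hM.mem_iff_of_anisotropic hQ] at hpx
  obtain ⟨f, hfx, hf⟩ := exists_functional_eq_one hp hM.fg hM.span_eq_top hpx
  exact ⟨f, hfx, fun z hz ↦ hf z ((hM.mem_iff_of_anisotropic hQ).2 hz)⟩

theorem AttainsUnit.representsResidualLength_of_inv_smul (h2 : (2 : K) ≠ 0) (hp : Irreducible p)
    (hQ : Q.Anisotropic) (h : AttainsUnit p ((p : K)⁻¹ • Q)) {n c : ℕ}
    (hn : Module.finrank K V = n + 1) (hc : HasResidualLength p Q c) :
    RepresentsResidualLength p Q n c := by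
  obtain ⟨b, hb, hpb⟩ := h
  simp only [smul_apply, smul_eq_mul] at hb hpb
  obtain ⟨f, hfb, hf⟩ := exists_functional_of_anisotropic h2 hp hQ (x := b)
    (by rwa [QuadraticMap.map_smul, smul_eq_mul, mul_assoc])
  obtain ⟨N, hN, hNc⟩ := hc
  have hker : (restrictForm Q (LinearMap.ker f)).Anisotropic := fun u hu ↦ Subtype.ext (hQ _ hu)
  obtain ⟨N', hN'⟩ := exists_isMaximalLattice (O := O) (nondeg_of_anisotropic h2 hker)
  refine representsResidualLength_of_hasResidualLength_ker h2 hQ hfb hn ⟨N', hN', ?_⟩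
  rw [← hNc]
  refine (residualLength_eq_of_prod hp hQ hN hN' (kerProdEquiv f hfb) (fun u ↦ ?_) ?_
    fun u t ht ↦ ?_).symm
  · simp [kerProdEquiv_apply]
  · simpa [kerProdEquiv_apply] using hb
  · simpa [kerProdEquiv_apply, hfb] using hf _ ht

theorem AttainsUnit.representsResidualLength (h2 : (2 : K) ≠ 0) (hp : Irreducible p)
    (hQ : Q.Anisotropic) (h : AttainsUnit p Q) {n c : ℕ}
    (hn : Module.finrank K V = n + 1) (hc : HasResidualLength p Q c) :
    ∃ c', c' + 1 = c ∧ RepresentsResidualLength p Q n c' := by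
  have hp0 : (p : K) ≠ 0 := mod_cast hp.ne_zero
  obtain ⟨b, hb, hpb⟩ := h
  have hcancel (z : V) : ((p : K) • Q) ((p : K)⁻¹ • z) = (p : K)⁻¹ * Q z := by
    simp only [smul_apply, QuadraticMap.map_smul, smul_eq_mul]
    field_simp
  obtain ⟨f, hfb, hf⟩ := exists_functional_of_anisotropic h2 hp (anisotropic_smul hQ hp0) (x := b)
    (by rwa [hcancel])
  obtain ⟨N, hN, hNc⟩ := hc
  have hker : (restrictForm Q (LinearMap.ker f)).Anisotropic := fun u hu ↦ Subtype.ext (hQ _ hu)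
  obtain ⟨c', N', hN', hc'⟩ := exists_hasResidualLength hp (nondeg_of_anisotropic h2 hker)
  refine ⟨c', ?_, representsResidualLength_of_hasResidualLength_ker h2 hQ hfb hn ⟨N', hN', hc'⟩⟩
  have hlength := residualLength_eq_add_one_of_prod hp hQ hN hN' (kerProdEquiv f hfb)
    (fun u ↦ by simp [kerProdEquiv_apply]) (by simpa [kerProdEquiv_apply] using hb)
    fun u t ht ↦ by
      simpa [kerProdEquiv_apply, hfb] using hf ((p : K)⁻¹ • (u + t • b)) (by rwa [hcancel])
  rw [hNc, hc'] at hlength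
  exact_mod_cast hlength.symm

end Hyperplanes

section UnaryForms

variable {p : O} {Q : QuadraticForm K V}

theorem AttainsUnit.finrank_pos [FiniteDimensional K V] (h : AttainsUnit p Q) :
    0 < Module.finrank K V := by
  obtain ⟨x, -, hx⟩ := h
  refine Module.finrank_pos_iff_exists_ne_zero.2 ⟨x, fun hx0 ↦ hx ?_⟩
  rw [hx0, QuadraticMap.map_zero, mul_zero]
  exact O.zero_mem

theorem spaceRep_prod_smul_sq_hyperbolicPlane_prod {c : K} :
    SpaceRep (Q.prod (c • QuadraticMap.sq)) ((hyperbolicPlane K).prod Q) :=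
  ⟨((LinearMap.id.prod (c • LinearMap.id)).prodMap LinearMap.id) ∘ₗ
      (LinearEquiv.prodComm K V K).toLinearMap,
    fun w w' h ↦ by simp_all [Prod.ext_iff],
    fun w ↦ by simp [hyperbolicPlane_apply]; ring⟩

theorem anisotropic_prod_smul_sq (hp : Irreducible p) (hQ : Q.Anisotropic) {c : K} (hc : c ≠ 0)
    (h : ¬AttainsUnit p (c⁻¹ • Q)) : (Q.prod (c • QuadraticMap.sq)).Anisotropic := by
  rintro ⟨u, t⟩ hut
  simp only [prod_apply, smul_apply, sq_apply, smul_eq_mul] at hut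
  by_cases ht : t = 0
  · simp only [ht, mul_zero, add_zero] at hut
    rw [ht, hQ u hut]
    rfl
  · have hvalue : (c⁻¹ • Q) (t⁻¹ • u) = -1 := by
      simp only [smul_apply, QuadraticMap.map_smul, smul_eq_mul, eq_neg_of_add_eq_zero_left hut]
      field_simp
    refine absurd ⟨t⁻¹ • u, ?_, ?_⟩ h
    · rw [hvalue]
      exact O.neg_mem O.one_mem
    · rw [hvalue, mul_neg_one, neg_mem_iff]
      exact inv_notMem_of_irreducible hp

variable [IsFractionRing O K] [IsDiscreteValuationRing O]

theorem inv_mul_mem_of_not_attainsUnit (hp : Irreducible p) (h : ¬AttainsUnit p Q) {u : V} {t : K}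
    (hut : (p : K)⁻¹ * (Q u + t * t) ∈ O) : (p : K)⁻¹ * t ∈ O := by
  have hp0 : (p : K) ≠ 0 := mod_cast hp.ne_zero
  by_contra ht
  have ht0 : t ≠ 0 := fun h0 ↦ ht (by rw [h0, mul_zero]; exact O.zero_mem)
  have hs : t⁻¹ ∈ O := inv_mem_of_inv_mul_notMem hp ht
  have hadd : (p : K)⁻¹ * (Q (t⁻¹ • u) + 1) ∈ O := by
    have heq : (p : K)⁻¹ * (Q (t⁻¹ • u) + 1) = t⁻¹ * t⁻¹ * ((p : K)⁻¹ * (Q u + t * t)) := by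
      rw [QuadraticMap.map_smul, smul_eq_mul]
      field_simp
    exact heq ▸ O.mul_mem (O.mul_mem hs hs) hut
  refine h ⟨t⁻¹ • u, ?_, fun hu ↦ inv_notMem_of_irreducible hp ?_⟩
  · simpa using O.sub_mem (mem_of_inv_mul_mem hp.ne_zero hadd) O.one_mem
  · simpa [mul_add] using O.sub_mem hadd hu

end UnaryForms

section HyperbolicSpaces

variable [IsFractionRing O K] [IsDiscreteValuationRing O] [HenselianLocalRing O] {p : O}
  {Q : QuadraticForm K V}

section FiniteDimensional

variable [FiniteDimensional K V]

theorem representsResidualLength_of_not_attainsUnit_inv_smul (h2 : (2 : K) ≠ 0)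
    (hp : Irreducible p) (hQ : Q.Anisotropic) (h : ¬AttainsUnit p ((p : K)⁻¹ • Q)) {c : ℕ}
    (hc : HasResidualLength p Q c) :
    RepresentsResidualLength p ((hyperbolicPlane K).prod Q) (Module.finrank K V + 1) c := by
  have hp0 : (p : K) ≠ 0 := mod_cast hp.ne_zero
  have hR := anisotropic_prod_smul_sq hp hQ hp0 h
  obtain ⟨N, hN⟩ := exists_isMaximalLattice (O := O) (nondeg_of_anisotropic h2 hR)
  obtain ⟨N', hN', hc⟩ := hc
  refine ⟨_, _, _, _, nondeg_of_anisotropic h2 hR, by simp,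
    spaceRep_prod_smul_sq_hyperbolicPlane_prod, N, hN, ?_⟩
  rw [← hc]
  refine residualLength_eq_of_prod hp hR hN hN' (.refl K _) (fun u ↦ ?_) ?_ fun u t ht ↦ ?_
  · simp
  · simp [hp0]
  · have hscaled : (p : K)⁻¹ * (((p : K)⁻¹ • Q) ((p : K) • u) + (p * t) * (p * t)) ∈ O := by
      convert ht using 1
      simp only [smul_apply, QuadraticMap.map_smul, LinearEquiv.refl_apply, prod_apply, sq_apply,
        smul_eq_mul]
      field_simp
    simpa [hp0] using inv_mul_mem_of_not_attainsUnit hp h hscaled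

theorem representsResidualLength_of_not_attainsUnit (h2 : (2 : K) ≠ 0) (hp : Irreducible p)
    (hQ : Q.Anisotropic) (h : ¬AttainsUnit p Q) {c : ℕ} (hc : HasResidualLength p Q c) :
    RepresentsResidualLength p ((hyperbolicPlane K).prod Q) (Module.finrank K V + 1) (c + 1) := by
  have hR := anisotropic_prod_smul_sq hp hQ one_ne_zero (by rwa [inv_one, one_smul])
  obtain ⟨N, hN⟩ := exists_isMaximalLattice (O := O) (nondeg_of_anisotropic h2 hR)
  obtain ⟨N', hN', hc⟩ := hc
  refine ⟨_, _, _, _, nondeg_of_anisotropic h2 hR, by simp,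
    spaceRep_prod_smul_sq_hyperbolicPlane_prod, N, hN, ?_⟩
  rw [Nat.cast_succ, ← hc]
  refine residualLength_eq_add_one_of_prod hp hR hN hN' (.refl K _) (fun u ↦ ?_) ?_ fun u t ht ↦ ?_
  · simp
  · simp
  · exact inv_mul_mem_of_not_attainsUnit hp h (by simpa using ht)

theorem exists_representsResidualLength_ne_of_hyperbolicPlane_prod (h2 : (2 : K) ≠ 0)
    (hp : Irreducible p) (hQ : Q.Anisotropic) {n : ℕ} (hn : Module.finrank K V + 1 = n) :
    ∃ c c', c ≠ c' ∧ RepresentsResidualLength p ((hyperbolicPlane K).prod Q) n c ∧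
      RepresentsResidualLength p ((hyperbolicPlane K).prod Q) n c' := by
  subst hn
  obtain ⟨c, hc⟩ := exists_hasResidualLength hp (nondeg_of_anisotropic h2 hQ)
  have hsucc : RepresentsResidualLength p ((hyperbolicPlane K).prod Q)
      (Module.finrank K V + 1) (c + 1) := by
    by_cases h : AttainsUnit p Q
    · obtain ⟨m, hm⟩ := Nat.exists_eq_add_one_of_ne_zero h.finrank_pos.ne'
      obtain ⟨c', rfl, hc'⟩ := h.representsResidualLength h2 hp hQ hm hc
      exact hm ▸ hc'.hyperbolicPlane_prod hp
    · exact representsResidualLength_of_not_attainsUnit h2 hp hQ h hc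
  by_cases h : AttainsUnit p ((p : K)⁻¹ • Q)
  · obtain ⟨m, hm⟩ := Nat.exists_eq_add_one_of_ne_zero h.finrank_pos.ne'
    refine ⟨c + 2, c + 1, by omega, ?_, hsucc⟩
    exact hm ▸ (h.representsResidualLength_of_inv_smul h2 hp hQ hm hc).hyperbolicPlane_prod hp
  · exact ⟨c, c + 1, by omega,
      representsResidualLength_of_not_attainsUnit_inv_smul h2 hp hQ h hc, hsucc⟩

end FiniteDimensional

theorem exists_representsResidualLength_ne_of_not_anisotropic (h2 : (2 : K) ≠ 0)
    (hp : Irreducible p) (hQ : Nondeg Q) (hiso : ¬Q.Anisotropic) {n : ℕ}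
    (hn : Module.finrank K V = n + 1) :
    ∃ c c', c ≠ c' ∧ RepresentsResidualLength p Q n c ∧ RepresentsResidualLength p Q n c' := by
  induction n using Nat.strong_induction_on generalizing V with
  | _ n ih =>
    have : FiniteDimensional K V := Module.finite_of_finrank_pos (by omega)
    obtain ⟨x₀, hx₀, hQx₀⟩ := (not_anisotropic_iff_exists Q).1 hiso
    obtain ⟨M, hM⟩ := exists_isMaximalLattice (O := O) hQ
    obtain ⟨a, y, -, -, -, h⟩ := hM.exists_isHyperbolicPair hx₀ hQx₀
    have hrank := h.finrank_pairComplement_add_two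
    suffices ∃ c c', c ≠ c' ∧
        RepresentsResidualLength p ((hyperbolicPlane K).prod (restrictForm Q _)) n c ∧
        RepresentsResidualLength p ((hyperbolicPlane K).prod (restrictForm Q _)) n c' by
      obtain ⟨c, c', hne, hc, hc'⟩ := this
      exact ⟨c, c', hne, hc.of_isometryEquiv h.isometryEquiv,
        hc'.of_isometryEquiv h.isometryEquiv⟩
    by_cases hU : (restrictForm Q (pairComplement Q (a • x₀) y)).Anisotropic
    · exact exists_representsResidualLength_ne_of_hyperbolicPlane_prod h2 hp hU (by omega)
    · obtain ⟨u, hu, -⟩ := (not_anisotropic_iff_exists _).1 hU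
      have hpos := (Module.finrank_pos_iff_exists_ne_zero (R := K)).2 ⟨u, hu⟩
      obtain ⟨m, rfl⟩ : ∃ m, n = m + 2 := ⟨n - 2, by omega⟩
      obtain ⟨c, c', hne, hc, hc'⟩ := ih m (by omega) (h.nondeg_restrictForm hQ) hU (by omega)
      exact ⟨c + 2, c' + 2, by omega, hc.hyperbolicPlane_prod hp, hc'.hyperbolicPlane_prod hp⟩

end HyperbolicSpaces

section ChevalleyWarning

variable {k ι : Type*} [Field k] [Finite k] [Fintype ι]

theorem exists_ne_zero_eval_eq_zero {f : MvPolynomial ι k} (hdeg : f.totalDegree < Fintype.card ι)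
    (h0 : MvPolynomial.eval 0 f = 0) : ∃ x ≠ 0, MvPolynomial.eval x f = 0 := by
  classical
  have := Fintype.ofFinite k
  obtain ⟨q, hq⟩ := CharP.exists k
  have hq2 : 2 ≤ q := (CharP.char_is_prime k q).two_le
  have hcard : 1 < Fintype.card {x : ι → k // MvPolynomial.eval x f = 0} :=
    hq2.trans (Nat.le_of_dvd (Fintype.card_pos_iff.2 ⟨0, h0⟩) (char_dvd_card_solutions q hdeg))
  obtain ⟨⟨x, hx⟩, hne⟩ := Fintype.exists_ne_of_one_lt_card hcard ⟨0, h0⟩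
  exact ⟨x, fun h ↦ hne (Subtype.ext h), hx⟩

theorem exists_ne_zero_sum_mul_mul_eq_zero (a : ι → ι → k) (h : 2 < Fintype.card ι) :
    ∃ x : ι → k, x ≠ 0 ∧ ∑ i, ∑ j, x i * x j * a i j = 0 := by
  let f : MvPolynomial ι k := ∑ i, ∑ j, .X i * .X j * .C (a i j)
  have heval (x : ι → k) : MvPolynomial.eval x f = ∑ i, ∑ j, x i * x j * a i j := by simp [f]
  have hdeg : f.totalDegree ≤ 2 := by
    refine MvPolynomial.totalDegree_finsetSum_le fun i _ ↦
      MvPolynomial.totalDegree_finsetSum_le fun j _ ↦ ?_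
    refine (MvPolynomial.totalDegree_mul _ _).trans ?_
    rw [MvPolynomial.totalDegree_C]
    simpa using MvPolynomial.totalDegree_mul (.X i : MvPolynomial ι k) (.X j)
  simpa only [heval] using exists_ne_zero_eval_eq_zero (hdeg.trans_lt h) ((heval 0).trans (by simp))

end ChevalleyWarning

section AttainsUnit

variable {Q : QuadraticForm K V} {M : Submodule O V}

theorem map_sum_smul_basis {ι : Type*} [Fintype ι] [LinearOrder ι] (Q : QuadraticForm K V)
    (b : Module.Basis ι K V) (x : ι → K) :
    Q (∑ i, x i • b i) = ∑ i, ∑ j, x i * x j * Q.toBilin b (b i) (b j) := by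
  conv_lhs => rw [← toQuadraticMap_toBilin Q b]
  simp_rw [LinearMap.BilinMap.toQuadraticMap_apply, LinearMap.map_sum₂, map_sum,
    LinearMap.map_smul₂, map_smul, smul_eq_mul, mul_assoc]

theorem IsIntegralLattice.toBilin_mem {ι : Type*} [LinearOrder ι] (hM : IsIntegralLattice Q M)
    (b : Module.Basis ι K V) (hb : ∀ i, b i ∈ M) (i j : ι) : Q.toBilin b (b i) (b j) ∈ O := by
  rw [toBilin_apply]
  split_ifs
  · exact hM.map_mem _ (hb i)
  · exact polar_mem hM.map_mem (hb i) (hb j)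
  · exact O.zero_mem

variable [IsFractionRing O K] [IsDiscreteValuationRing O]
  [Finite (IsLocalRing.ResidueField O)] {p : O}

theorem IsIntegralLattice.exists_inv_mul_map_mem_of_three_le_finrank (hp : Irreducible p)
    (hM : IsIntegralLattice Q M) (hV : 3 ≤ Module.finrank K V) :
    ∃ u ∈ M, (p : K)⁻¹ • u ∉ M ∧ (p : K)⁻¹ * Q u ∈ O := by
  obtain ⟨b, hb⟩ := exists_basis_mem_iff hM.fg hM.span_eq_top
  have hbM (i) : b i ∈ M := (hb _).2 fun j ↦ by
    rw [b.repr_self_apply]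
    split_ifs
    exacts [O.one_mem, O.zero_mem]
  let B (i j) : O := ⟨_, hM.toBilin_mem b hbM i j⟩
  have mem_maximalIdeal (a : O) : IsLocalRing.residue O a = 0 ↔ (p : K)⁻¹ * a ∈ O := by
    rw [IsLocalRing.residue_eq_zero_iff, hp.maximalIdeal_eq, Ideal.mem_span_singleton,
      inv_mul_coe_mem_iff_dvd hp.ne_zero]
  obtain ⟨x, hx0, hx⟩ := exists_ne_zero_sum_mul_mul_eq_zero
    (fun i j ↦ IsLocalRing.residue O (B i j)) (by rw [Fintype.card_fin]; omega)
  choose y hy using fun i ↦ IsLocalRing.residue_surjective (x i)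
  have hrepr (i) : b.repr (∑ i, (y i : K) • b i) i = y i := by
    rw [b.repr_sum_self]
  refine ⟨∑ i, (y i : K) • b i, (hb _).2 fun i ↦ hrepr i ▸ (y i).2, fun hmem ↦ hx0 ?_, ?_⟩
  · ext i
    rw [← hy, Pi.zero_apply, mem_maximalIdeal]
    simpa only [map_smul, Finsupp.smul_apply, smul_eq_mul, hrepr] using (hb _).1 hmem i
  · have hQ : Q (∑ i, (y i : K) • b i) = (∑ i, ∑ j, y i * y j * B i j : O) := by
      rw [map_sum_smul_basis]
      push_cast
      rfl
    rw [hQ, ← mem_maximalIdeal]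
    simpa only [map_sum, map_mul, hy] using hx

theorem attainsUnit_of_three_le_finrank [HenselianLocalRing O] (h2 : (2 : K) ≠ 0)
    (hp : Irreducible p) (hQ : Q.Anisotropic) (hV : 3 ≤ Module.finrank K V) :
    AttainsUnit p Q := by
  have hp0 : (p : K) ≠ 0 := mod_cast hp.ne_zero
  have : FiniteDimensional K V := Module.finite_of_finrank_pos (by omega)
  have hpQ := anisotropic_smul hQ hp0
  obtain ⟨M, hM⟩ := exists_isMaximalLattice (O := O) (nondeg_of_anisotropic h2 hpQ)
  obtain ⟨u, -, hpu, hu⟩ := hM.exists_inv_mul_map_mem_of_three_le_finrank hp hV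
  rw [hM.mem_iff_of_anisotropic hpQ] at hpu
  refine ⟨u, by simpa [hp0] using hu, fun h ↦ hpu ?_⟩
  simpa [QuadraticMap.map_smul, hp0, mul_assoc] using h

theorem exists_representsResidualLength_ne [HenselianLocalRing O] (h2 : (2 : K) ≠ 0)
    (hp : Irreducible p) (hQ : Nondeg Q) {n : ℕ} (hn : 2 ≤ n) (hV : Module.finrank K V = n + 1) :
    ∃ c c', c ≠ c' ∧ RepresentsResidualLength p Q n c ∧ RepresentsResidualLength p Q n c' := by
  by_cases haniso : Q.Anisotropic
  · have hp0 : (p : K) ≠ 0 := mod_cast hp.ne_zero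
    have : FiniteDimensional K V := Module.finite_of_finrank_pos (by omega)
    obtain ⟨c, hc⟩ := exists_hasResidualLength hp hQ
    have hunit := attainsUnit_of_three_le_finrank h2 hp haniso (by omega)
    have hinv := attainsUnit_of_three_le_finrank h2 hp
      (anisotropic_smul haniso (inv_ne_zero hp0)) (by omega)
    obtain ⟨c', hc', h⟩ := hunit.representsResidualLength h2 hp haniso hV hc
    exact ⟨c', c, by omega, h, hinv.representsResidualLength_of_inv_smul h2 hp haniso hV hc⟩
  · exact exists_representsResidualLength_ne_of_not_anisotropic h2 hp hQ haniso hV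

end AttainsUnit

section CodimensionOne

theorem exists_ker_eq_of_finrank_eq_add_one [FiniteDimensional K V] {U : Submodule K V}
    (hU : Module.finrank K V = Module.finrank K U + 1) :
    ∃ f : V →ₗ[K] K, LinearMap.ker f = U := by
  have hquot : Module.finrank K (V ⧸ U) = 1 := by
    have := U.finrank_quotient_add_finrank
    omega
  let e : (V ⧸ U) ≃ₗ[K] K := LinearEquiv.ofFinrankEq _ _ (by rw [hquot, Module.finrank_self])
  exact ⟨e.toLinearMap ∘ₗ U.mkQ, by rw [LinearEquiv.ker_comp, Submodule.ker_mkQ]⟩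

theorem exists_map_sub_smul_eq_zero [IsFractionRing O K] [IsDiscreteValuationRing O] {p : O}
    (hp : Irreducible p) {L M : Submodule O V} (hfg : M.FG) (hLM : L < M) (f : V →ₗ[K] K)
    (hker : ∀ m ∈ M, f m = 0 → m ∈ L) {l : V} (hl : l ∈ L) :
    ∃ z ∈ M, f (l - (p : K) • z) = 0 := by
  obtain ⟨a, ha⟩ := exists_generator_of_fg (hfg.map (f.restrictScalars O))
  have hgen (m : V) (hm : m ∈ M) : ∃ b : O, b • a = f m :=
    Submodule.mem_span_singleton.1 (ha ▸ Submodule.mem_map_of_mem hm)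
  obtain ⟨m₀, hm₀, hfm₀⟩ : ∃ m₀ ∈ M, f m₀ = a :=
    (ha ▸ Submodule.mem_span_singleton_self a : a ∈ M.map (f.restrictScalars O))
  obtain ⟨b, hb⟩ := hgen l (hLM.le hl)
  by_cases hpb : p ∣ b
  · obtain ⟨c, rfl⟩ := hpb
    refine ⟨c • m₀, M.smul_mem c hm₀, ?_⟩
    rw [map_sub, ← hb, LinearMap.map_smul, LinearMap.map_smul_of_tower, hfm₀, mul_smul]
    exact sub_self _
  · have hunit : IsUnit b := by
      by_contra hb'
      rw [← mem_nonunits_iff, ← IsLocalRing.mem_maximalIdeal, hp.maximalIdeal_eq] at hb'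
      exact hpb (Ideal.mem_span_singleton.1 hb')
    obtain ⟨b, rfl⟩ := hunit
    refine absurd (fun m hm ↦ ?_) hLM.not_ge
    obtain ⟨c, hc⟩ := hgen m hm
    have hz : (c * ↑b⁻¹ : O) • l ∈ L := L.smul_mem _ hl
    refine (L.sub_mem_iff_left hz).1 (hker _ (M.sub_mem hm (hLM.le hz)) ?_)
    rw [map_sub, LinearMap.map_smul_of_tower, ← hb, ← hc, smul_smul, b.inv_mul_cancel_right,
      sub_self]

end CodimensionOne

section IsometricEmbeddings

variable {W : Type} [AddCommGroup W] [Module K W] {Q : QuadraticForm K V}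
  {Q' : QuadraticForm K W} {N : Submodule O W} {L M : Submodule O V} {σ : W →ₗ[K] V}

theorem IsMaximalLattice.mem_of_map_mem (hN : IsMaximalLattice Q' N) (hM : ∀ x ∈ M, Q x ∈ O)
    (hσ : ∀ x, Q (σ x) = Q' x) (hσN : ∀ x ∈ N, σ x ∈ M) {w : W} (hw : σ w ∈ M) : w ∈ N :=
  hN.mem_of_integral w (hσ w ▸ hM _ hw) fun y hy ↦ by
    rw [← polar_apply_of_isometry σ hσ]
    exact polar_mem hM hw (hσN y hy)

theorem residualLength_eq_of_forall_exists_add_smul {p : O} (hp : p ≠ 0)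
    (hM : ∀ x ∈ M, Q x ∈ O) (hLM : L ≤ M) (hσ : ∀ x, Q (σ x) = Q' x) (hσN : ∀ x ∈ N, σ x ∈ L)
    (hL : ∀ l ∈ L, ∃ w ∈ N, ∃ z ∈ M, l = σ w + (p : K) • z) :
    residualLength p Q L = residualLength p Q' N := by
  have hp0 : (p : K) ≠ 0 := mod_cast hp
  let φ : N →ₗ[O] L := (σ.restrictScalars O).restrict hσN
  have hφ (w : N) : (φ w : V) = σ w := rfl
  refine residualLength_eq_of_surjective φ
    (residualRadical p Q' N).mkQ (Submodule.mkQ_surjective _) (fun ⟨l, hl⟩ ↦ ?_) fun w ↦ ?_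
  · obtain ⟨w, hw, z, hz, rfl⟩ := hL l hl
    refine ⟨⟨w, hw⟩, ?_, fun y hy ↦ ?_⟩
    · change (p : K)⁻¹ * Q (σ w + (p : K) • z - σ w) ∈ O
      simpa [QuadraticMap.map_smul, hp0, mul_assoc] using O.mul_mem p.2 (hM z hz)
    · change (p : K)⁻¹ * polar Q (σ w + (p : K) • z - σ w) y ∈ O
      simpa [hp0] using polar_mem hM hz (hLM hy)
  · rw [Submodule.mkQ_apply, Submodule.Quotient.mk_eq_zero, mem_residualRadical,
      mem_residualRadical]
    refine and_congr (by rw [hφ, hσ]) ⟨fun h y hy ↦ ?_, fun h l hl ↦ ?_⟩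
    · rw [← polar_apply_of_isometry σ hσ]
      exact h _ (hσN y hy)
    · obtain ⟨y, hy, z, hz, rfl⟩ := hL l hl
      have hpz : (p : K)⁻¹ * polar Q (σ w) ((p : K) • z) ∈ O := by
        simpa [hp0] using polar_mem hM (hLM (hσN w w.2)) hz
      rw [polar_add_right, mul_add, hφ, polar_apply_of_isometry σ hσ]
      exact O.add_mem (h y hy) hpz

end IsometricEmbeddings

section ADC

variable [IsFractionRing O K] [IsDiscreteValuationRing O] {p : O} {Q : QuadraticForm K V}
  {L M : Submodule O V} {n : ℕ}

theorem IsADC.residualLength_eq (hp : Irreducible p) (hV : Module.finrank K V = n + 1)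
    (hM : IsIntegralLattice Q M) (hLM : L < M) (hL : IsADC O Q (L : Set V) n) {c : ℕ}
    (hc : RepresentsResidualLength p Q n c) : residualLength p Q L = c := by
  have : FiniteDimensional K V := Module.finite_of_finrank_pos (by omega)
  obtain ⟨W, _, _, Q', hQ', hW, hrep, N, hN, hNc⟩ := hc
  obtain ⟨σ, hinj, hσ, hσL⟩ := hL W Q' hQ' hW N hN.isLatticeOn hN.map_mem hrep
  have hσN (w : W) (hw : w ∈ N) : σ w ∈ L := hσL ⟨w, hw, rfl⟩
  have mem_of_map_mem {w : W} : σ w ∈ M → w ∈ N :=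
    hN.mem_of_map_mem hM.map_mem hσ fun y hy ↦ hLM.le (hσN y hy)
  obtain ⟨f, hf⟩ := exists_ker_eq_of_finrank_eq_add_one (U := LinearMap.range σ)
    (by rw [LinearMap.finrank_range_of_inj hinj, hW, hV])
  have exists_of_ker {m : V} (hm : m ∈ M) (hfm : f m = 0) : ∃ w ∈ N, σ w = m := by
    obtain ⟨w, rfl⟩ : m ∈ LinearMap.range σ := hf ▸ hfm
    exact ⟨w, mem_of_map_mem hm, rfl⟩
  rw [← hNc]
  refine residualLength_eq_of_forall_exists_add_smul hp.ne_zero hM.map_mem hLM.le hσ hσN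
    fun l hl ↦ ?_
  obtain ⟨z, hz, hfz⟩ := exists_map_sub_smul_eq_zero hp hM.fg hLM f
    (fun m hm hfm ↦ by obtain ⟨w, hw, rfl⟩ := exists_of_ker hm hfm; exact hσN w hw) hl
  obtain ⟨w, hw, hσw⟩ := exists_of_ker (M.sub_mem (hLM.le hl) (M.smul_mem p hz)) hfz
  exact ⟨w, hw, z, hz, by rw [hσw]; exact (sub_add_cancel _ _).symm⟩

theorem IsADC.isMaximalLattice [HenselianLocalRing O] [Finite (IsLocalRing.ResidueField O)]
    (h2 : (2 : K) ≠ 0) (hn : 2 ≤ n) (hV : Module.finrank K V = n + 1) (hQ : Nondeg Q)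
    (hL : IsIntegralLattice Q L) (hadc : IsADC O Q (L : Set V) n) : IsMaximalLattice Q L := by
  have : FiniteDimensional K V := Module.finite_of_finrank_pos (by omega)
  obtain ⟨p, hp⟩ := IsDiscreteValuationRing.exists_irreducible O
  obtain ⟨M, hLM, hM⟩ := hL.exists_le_isMaximalLattice hQ
  obtain rfl | hlt := hLM.eq_or_lt
  · exact hM
  · obtain ⟨c, c', hne, hc, hc'⟩ := exists_representsResidualLength_ne h2 hp hQ hn hV
    have heq := (hadc.residualLength_eq hp hV hM.toIsIntegralLattice hlt hc).symm.trans
      (hadc.residualLength_eq hp hV hM.toIsIntegralLattice hlt hc')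
    exact absurd (mod_cast heq) hne

theorem isADC_iff_isMaximalLattice_of_finrank_eq_add_one [HenselianLocalRing O]
    [Finite (IsLocalRing.ResidueField O)] (h2 : (2 : K) ≠ 0) (hn : 2 ≤ n)
    (hV : Module.finrank K V = n + 1) (hQ : Nondeg Q) (hL : IsIntegralLattice Q L) :
    IsADC O Q (L : Set V) n ↔ IsMaximalLattice Q L := by
  have : FiniteDimensional K V := Module.finite_of_finrank_pos (by omega)
  exact ⟨fun h ↦ h.isMaximalLattice h2 hn hV hQ hL, fun h ↦ h.isADC hQ n⟩

end ADC

end QLat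

namespace QLat

section CompleteNormedField

open IsLocalRing

theorem henselianLocalRing_of_isAdicComplete (R : Type*) [CommRing R] [IsLocalRing R]
    [IsAdicComplete (maximalIdeal R) R] : HenselianLocalRing R where
  is_henselian f hf a h1 h2 := HenselianRing.is_henselian f hf a h1 (h2.map _)

variable {K : Type} [NormedField K] {O : Subring K}

theorem mem_maximalIdeal_iff_norm_lt_one [IsLocalRing O] (hO : ∀ x, x ∈ O ↔ ‖x‖ ≤ 1) (x : O) :
    x ∈ maximalIdeal O ↔ ‖(x : K)‖ < 1 := by
  rw [mem_maximalIdeal, mem_nonunits_iff, ← not_le, not_iff_not]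
  constructor
  · intro hx
    obtain ⟨y, hxy⟩ := hx.exists_right_inv
    have hnorm : ‖(x : K)‖ * ‖(y : K)‖ = 1 := by
      simpa using congrArg (fun z : O ↦ ‖(z : K)‖) hxy
    exact hnorm ▸ mul_le_of_le_one_right (norm_nonneg _) ((hO y).1 y.2)
  · intro hx
    have hx0 : (x : K) ≠ 0 := norm_pos_iff.1 (one_pos.trans_le hx)
    have hinv : (x : K)⁻¹ ∈ O := (hO _).2 (by rw [norm_inv]; exact inv_le_one_of_one_le₀ hx)
    exact .of_mul_eq_one ⟨_, hinv⟩ (Subtype.ext (mul_inv_cancel₀ hx0))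

theorem mem_maximalIdeal_pow_iff_norm_le [IsDiscreteValuationRing O]
    (hO : ∀ x, x ∈ O ↔ ‖x‖ ≤ 1) {p : O} (hp : Irreducible p) (n : ℕ) (x : O) :
    x ∈ maximalIdeal O ^ n ↔ ‖(x : K)‖ ≤ ‖(p : K)‖ ^ n := by
  have hp0 : (p : K) ≠ 0 := by simpa using hp.ne_zero
  rw [hp.maximalIdeal_eq, Ideal.span_singleton_pow, Ideal.mem_span_singleton]
  constructor
  · rintro ⟨a, rfl⟩
    simpa using mul_le_of_le_one_right (by positivity) ((hO a).1 a.2)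
  · intro hx
    have hmem : (x : K) / p ^ n ∈ O := (hO _).2 <| by
      rw [norm_div, norm_pow]
      exact div_le_one_of_le₀ hx (by positivity)
    exact ⟨⟨_, hmem⟩, Subtype.ext (by simp [mul_div_cancel₀ _ (pow_ne_zero n hp0)])⟩

theorem isAdic_maximalIdeal_of_norm [IsDiscreteValuationRing O]
    (hO : ∀ x, x ∈ O ↔ ‖x‖ ≤ 1) : IsAdic (maximalIdeal O) := by
  obtain ⟨p, hp⟩ := IsDiscreteValuationRing.exists_irreducible O
  have hp0 : 0 < ‖(p : K)‖ := by simpa using hp.ne_zero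
  have hp1 : ‖(p : K)‖ < 1 := (mem_maximalIdeal_iff_norm_lt_one hO p).1 hp.not_isUnit
  have hmem := mem_maximalIdeal_pow_iff_norm_le hO hp
  refine isAdic_iff.2 ⟨fun n ↦ ?_, fun s hs ↦ ?_⟩
  · refine (maximalIdeal O ^ n).toAddSubgroup.isOpen_of_mem_nhds (g := 0) ?_
    filter_upwards [Metric.ball_mem_nhds (0 : O) (pow_pos hp0 n)] with x hx
    exact (hmem n x).2 (by simpa using (mem_ball_zero_iff.1 hx).le)
  · obtain ⟨ε, hε, hs⟩ := Metric.mem_nhds_iff.1 hs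
    obtain ⟨n, hn⟩ := exists_pow_lt_of_lt_one hε hp1
    exact ⟨n, fun x hx ↦ hs (mem_ball_zero_iff.2 (((hmem n x).1 hx).trans_lt hn))⟩

theorem henselianLocalRing_of_norm [CompleteSpace K] [IsDiscreteValuationRing O]
    (hO : ∀ x, x ∈ O ↔ ‖x‖ ≤ 1) : HenselianLocalRing O := by
  have hclosed : IsClosed (O : Set K) := by
    convert isClosed_le (continuous_norm (E := K)) (continuous_const (y := 1))
    exact Set.ext hO
  have : CompleteSpace O := hclosed.completeSpace_coe
  have : IsPrecomplete (maximalIdeal O) O :=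
    (isAdic_maximalIdeal_of_norm hO).isPrecomplete_iff.2 ‹_›
  have : IsAdicComplete (maximalIdeal O) O := { }
  exact henselianLocalRing_of_isAdicComplete O

end CompleteNormedField

end QLat

namespace QGlob

section LocalField

variable {F : Type} [Field F] [NumberField F]
  {v : HeightOneSpectrum (NumberField.RingOfIntegers F)}

instance : IsDiscreteValuationRing (Ov F v) :=
  inferInstanceAs (IsDiscreteValuationRing (v.adicCompletionIntegers F))

instance : IsFractionRing (Ov F v) (Fv F v) :=
  inferInstanceAs (IsFractionRing (v.adicCompletionIntegers F) (v.adicCompletion F))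

theorem mem_Ov_iff_norm_le_one (x : Fv F v) : x ∈ Ov F v ↔ ‖x‖ ≤ 1 :=
  (Valued.toNormedField.norm_le_one_iff (L := Fv F v)).symm

instance : HenselianLocalRing (Ov F v) := henselianLocalRing_of_norm mem_Ov_iff_norm_le_one

theorem valued_algebraMap (d : F) : Valued.v (algebraMap F (Fv F v) d) = v.valuation F d := by
  rw [HeightOneSpectrum.algebraMap_adicCompletion]
  exact HeightOneSpectrum.valuedAdicCompletion_eq_valuation' v d

theorem algebraMap_mem_Ov_iff {d : F} : algebraMap F (Fv F v) d ∈ Ov F v ↔ v.valuation F d ≤ 1 := by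
  rw [← valued_algebraMap]
  rfl

theorem algebraMap_mem_Ov {d : F} (hd : d ∈ OF F) : algebraMap F (Fv F v) d ∈ Ov F v :=
  algebraMap_mem_Ov_iff.2 (v.valuation_le_one (⟨d, hd⟩ : NumberField.RingOfIntegers F))

theorem algebraMap_inv_mem_Ov {t : NumberField.RingOfIntegers F} (ht : t ∉ v.asIdeal) :
    algebraMap F (Fv F v) (t : F)⁻¹ ∈ Ov F v := by
  rw [algebraMap_mem_Ov_iff, map_inv₀, v.valuation_eq_one_iff_notMem.2 ht, inv_one]

theorem exists_mul_mem_OF {d : F} (hd : algebraMap F (Fv F v) d ∈ Ov F v) :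
    ∃ t : NumberField.RingOfIntegers F, t ∉ v.asIdeal ∧ (t : F) * d ∈ OF F := by
  obtain ⟨a, ⟨t, ht⟩, h⟩ := v.exists_primeCompl_mul_eq_of_integer d (algebraMap_mem_Ov_iff.1 hd)
  have h : d * t = a := h
  exact ⟨t, ht, by rw [mul_comm, h]; exact a.2⟩

theorem exists_forall_sub_mul_mem_Ov (x : Fv F v) (s : Finset (Fv F v)) :
    ∃ d : F, ∀ c ∈ s, (x - algebraMap F (Fv F v) d) * c ∈ Ov F v := by
  have hOv : IsOpen (Ov F v : Set (Fv F v)) := Valued.isOpen_valuationSubring _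
  have hopen : IsOpen (⋂ c ∈ s, (fun y ↦ (x - y) * c) ⁻¹' (Ov F v : Set (Fv F v))) :=
    isOpen_biInter_finset fun c _ ↦ hOv.preimage <|
      (continuous_const.sub continuous_id).mul continuous_const
  obtain ⟨d, hd⟩ := (HeightOneSpectrum.denseRange_algebraMap (K := F) v).exists_mem_open hopen
    ⟨x, by simp [(Ov F v).zero_mem]⟩
  exact ⟨d, by simpa using hd⟩

theorem exists_integer_norm_sub_lt_one {x : Fv F v} (hx : x ∈ Ov F v) :
    ∃ a : NumberField.RingOfIntegers F, ‖algebraMap F (Fv F v) a - x‖ < 1 := by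
  have hopen : IsOpen {y : Fv F v | ‖y - x‖ < 1} :=
    isOpen_lt (continuous_id.sub continuous_const).norm continuous_const
  obtain ⟨d, hd⟩ := (HeightOneSpectrum.denseRange_algebraMap (K := F) v).exists_mem_open hopen
    ⟨x, by simp⟩
  have hd : Valued.v (algebraMap F (Fv F v) d - x) < 1 := Valued.toNormedField.norm_lt_one_iff.1 hd
  have hdO : algebraMap F (Fv F v) d ∈ Ov F v :=
    sub_add_cancel (algebraMap F (Fv F v) d) x ▸ (Ov F v).add_mem hd.le hx
  obtain ⟨a, ha⟩ := v.exists_valuation_sub_lt_of_integer (algebraMap_mem_Ov_iff.1 hdO) 1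
  rw [← valued_algebraMap, map_sub] at ha
  refine ⟨a, Valued.toNormedField.norm_lt_one_iff.2 ?_⟩
  simpa using Valuation.map_add_lt _ ha hd

theorem mem_maximalIdeal_Ov_iff (x : Ov F v) :
    x ∈ IsLocalRing.maximalIdeal (Ov F v) ↔ ‖(x : Fv F v)‖ < 1 :=
  mem_maximalIdeal_iff_norm_lt_one (K := Fv F v) mem_Ov_iff_norm_le_one x

instance : Finite (IsLocalRing.ResidueField (Ov F v)) := by
  let g : NumberField.RingOfIntegers F →+* Ov F v :=
    ((algebraMap F (Fv F v)).comp (algebraMap (NumberField.RingOfIntegers F) F)).codRestrict _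
      fun a ↦ algebraMap_mem_Ov a.2
  let f := (IsLocalRing.residue (Ov F v)).comp g
  have hsurj : Function.Surjective f := by
    intro y
    obtain ⟨x, rfl⟩ := IsLocalRing.residue_surjective y
    obtain ⟨a, ha⟩ := exists_integer_norm_sub_lt_one x.2
    exact ⟨a, Ideal.Quotient.eq.2 ((mem_maximalIdeal_Ov_iff _).2 ha)⟩
  have hker : v.asIdeal ≤ RingHom.ker f := by
    intro a ha
    refine Ideal.Quotient.eq_zero_iff_mem.2 ((mem_maximalIdeal_Ov_iff _).2 ?_)
    exact Valued.toNormedField.norm_lt_one_iff.2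
      ((valued_algebraMap _).trans_lt ((v.valuation_lt_one_iff_mem a).2 ha))
  have := Ideal.finiteQuotientOfFreeOfNeBot (RingHom.ker f) (ne_bot_of_le_ne_bot v.ne_bot hker)
  exact .of_equiv _ (RingHom.quotientKerEquivOfSurjective hsurj).toEquiv

end LocalField

end QGlob

namespace QLat
open QuadraticMap

section Span

variable {K : Type} [Field K] {O : Subring K} {V : Type} [AddCommGroup V] [Module K V]
  {Q : QuadraticForm K V} {S : Set V}

theorem polar_mem_of_mem_span {x y : V} (hS : ∀ y ∈ S, polar Q x y ∈ O)
    (hy : y ∈ Submodule.span O S) : polar Q x y ∈ O := by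
  induction hy using Submodule.span_induction with
  | mem y hy => exact hS y hy
  | zero => exact polar_zero_right (Q := Q) x ▸ O.zero_mem
  | add y z _ _ hy hz => exact polar_add_right (Q := Q) x y z ▸ O.add_mem hy hz
  | smul a y _ hy => exact polar_smul_right_of_tower (Q := Q) a x y ▸ O.mul_mem a.2 hy

theorem map_mem_of_mem_span {x : V} (hS : ∀ y ∈ S, Q y ∈ O)
    (hpolar : ∀ y ∈ S, ∀ z ∈ S, polar Q y z ∈ O) (hx : x ∈ Submodule.span O S) : Q x ∈ O := by
  induction hx using Submodule.span_induction with
  | mem y hy => exact hS y hy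
  | zero => exact (QuadraticMap.map_zero Q).symm ▸ O.zero_mem
  | add y z hyS hzS hy hz =>
    have hyz : polar Q y z ∈ O := by
      refine polar_mem_of_mem_span (fun z hz ↦ ?_) hzS
      rw [polar_comm]
      exact polar_mem_of_mem_span (hpolar z hz) hyS
    exact (QuadraticMap.map_add Q y z).symm ▸ O.add_mem (O.add_mem hy hz) hyz
  | smul a y _ hy =>
    exact (QuadraticMap.map_smul_of_tower Q a y).symm ▸ O.mul_mem (a * a).2 hy

theorem exists_basis_mem {L : Submodule O V} (hL : Submodule.span K (L : Set V) = ⊤) :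
    ∃ (ι : Type) (b : Module.Basis ι K V), ∀ i, b i ∈ L :=
  ⟨_, .ofSpan hL.ge, fun i ↦ Module.Basis.ofSpan_subset hL.ge (Set.mem_range_self i)⟩

theorem span_image_span {K' : Type} [Field K'] [Algebra K K'] {O' : Subring K'} {V' : Type}
    [AddCommGroup V'] [Module K V'] [Module K' V'] [IsScalarTower K K' V'] (f : V →ₗ[K] V')
    (hO : ∀ a ∈ O, algebraMap K K' a ∈ O') :
    Submodule.span O' (f '' Submodule.span O S) = Submodule.span O' (f '' S) := by
  refine le_antisymm (Submodule.span_le.2 ?_)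
    (Submodule.span_mono (Set.image_mono Submodule.subset_span))
  rintro _ ⟨x, hx, rfl⟩
  induction hx using Submodule.span_induction with
  | mem x hx => exact Submodule.subset_span (Set.mem_image_of_mem f hx)
  | zero => simp
  | add x y _ _ hx hy => exact map_add f x y ▸ Submodule.add_mem _ hx hy
  | smul a x _ hx =>
    have hsmul : f (a • x) = (⟨_, hO a a.2⟩ : O') • f x :=
      (map_smul f (a : K) x).trans (algebraMap_smul K' (a : K) (f x)).symm
    exact hsmul ▸ Submodule.smul_mem _ _ hx

end Span

end QLat

namespace QGlob
open QuadraticMap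

section Completion

variable {F : Type} [Field F] [NumberField F] {V : Type} [AddCommGroup V] [Module F V]
  {Q : QuadraticForm F V} {v : HeightOneSpectrum (NumberField.RingOfIntegers F)}
  {L : Submodule (OF F) V}

theorem toVv_add (x y : V) : toVv F v (x + y) = toVv F v x + toVv F v y :=
  TensorProduct.tmul_add _ _ _

theorem toVv_smul (a : F) (x : V) :
    toVv F v (a • x) = algebraMap F (Fv F v) a • toVv F v x :=
  (TensorProduct.tmul_smul _ _ _).trans (algebraMap_smul (Fv F v) a (toVv F v x)).symm

theorem toVv_sub (x y : V) : toVv F v (x - y) = toVv F v x - toVv F v y :=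
  TensorProduct.tmul_sub _ _ _

theorem smul_sub_toVv_smul (c : Fv F v) (z : Vv F V v) (d : F) (y : V) :
    c • z - toVv F v (d • y) =
      c • (z - toVv F v y) + (c - algebraMap F (Fv F v) d) • toVv F v y := by
  rw [toVv_smul]
  module

theorem repr_toVv {ι : Type} (b : Module.Basis ι F V) (x : V) (i : ι) :
    (b.baseChange (Fv F v)).repr (toVv F v x) i = algebraMap F (Fv F v) (b.repr x i) := by
  rw [toVv, Module.Basis.baseChange_repr_tmul, Algebra.smul_def, mul_one]

theorem Qv_toVv (x : V) : Qv F Q v (toVv F v x) = algebraMap F (Fv F v) (Q x) := by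
  let _ : Invertible (2 : F) := invertibleOfNonzero two_ne_zero
  refine (QuadraticForm.baseChange_tmul (A := Fv F v) Q 1 x).trans ?_
  rw [mul_one, Algebra.smul_def, mul_one]

theorem polar_toVv (x y : V) :
    polar (Qv F Q v) (toVv F v x) (toVv F v y) = algebraMap F (Fv F v) (polar Q x y) := by
  simp only [polar, ← toVv_add, Qv_toVv, map_sub]

/-- Instance search finds `TensorProduct.leftModule` here, which does not unify with the
restriction of scalars along `Ov F v ⊆ Fv F v` that `QLat` uses. -/
local instance : Module (Ov F v) (Vv F V v) := Subsemiring.instModuleSubtypeMem (Ov F v)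

variable (v L) in
/-- The completion `L_v` of the lattice `L`, as an `O_v`-submodule of `V_v`. -/
def completion : Submodule (Ov F v) (Vv F V v) := Submodule.span (Ov F v) (toVv F v '' L)

theorem coe_completion : (completion v L : Set (Vv F V v)) = Lv F L v := (ospan_eq_span _).symm

theorem toVv_mem_completion {x : V} (hx : x ∈ L) : toVv F v x ∈ completion v L :=
  Submodule.subset_span (Set.mem_image_of_mem _ hx)

theorem fg_completion (hL : L.FG) : (completion v L).FG := by
  obtain ⟨s, rfl⟩ := hL
  have hspan : completion v (Submodule.span (OF F) (s : Set V)) =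
      Submodule.span (Ov F v) (toVv F v '' s) :=
    span_image_span (TensorProduct.mk F (Fv F v) V 1) fun _ ↦ algebraMap_mem_Ov
  exact hspan ▸ Submodule.fg_span (s.finite_toSet.image _)

theorem map_mem_completion (hL : ∀ x ∈ L, Q x ∈ OF F) :
    ∀ z ∈ completion v L, Qv F Q v z ∈ Ov F v := by
  refine fun z hz ↦ map_mem_of_mem_span ?_ ?_ hz
  · rintro _ ⟨x, hx, rfl⟩
    exact Qv_toVv (v := v) x ▸ algebraMap_mem_Ov (hL x hx)
  · rintro _ ⟨x, hx, rfl⟩ _ ⟨y, hy, rfl⟩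
    exact polar_toVv (v := v) x y ▸ algebraMap_mem_Ov (polar_mem hL hx hy)

theorem span_image_toVv (hL : Submodule.span F (L : Set V) = ⊤) :
    Submodule.span (Fv F v) (toVv F v '' (L : Set V)) = ⊤ := by
  obtain ⟨ι, b, hb⟩ := exists_basis_mem hL
  rw [eq_top_iff, ← (b.baseChange (Fv F v)).span_eq]
  refine Submodule.span_mono ?_
  rintro _ ⟨i, rfl⟩
  exact ⟨b i, hb i, (b.baseChange_apply (Fv F v) i).symm⟩

theorem isIntegralLattice_completion (hL : IsIntegralLattice Q L) :
    IsIntegralLattice (Qv F Q v) (completion v L) where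
  fg := fg_completion hL.fg
  span_eq_top := top_le_iff.1 <| (span_image_toVv hL.span_eq_top).ge.trans
    (Submodule.span_mono Submodule.subset_span)
  map_mem := map_mem_completion hL.map_mem

theorem nondeg_Qv [FiniteDimensional F V] (hQ : Nondeg Q) : Nondeg (Qv F Q v) := by
  classical
  intro x hx
  let b := Module.finBasis F V
  let b' := LinearMap.BilinForm.dualBasis (polarBilin Q) (polarBilin_nondegenerate hQ) b
  have hcoord (i) : (polarBilin (Qv F Q v)).flip (toVv F v (b i)) =
      (b'.baseChange (Fv F v)).coord i := by
    refine (b'.baseChange (Fv F v)).ext fun j ↦ ?_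
    have hdual : polar Q (b' j) (b i) = if i = j then 1 else 0 :=
      LinearMap.BilinForm.apply_dualBasis_left (polarBilin_nondegenerate hQ) b j i
    rw [Module.Basis.coord_apply, Module.Basis.repr_self, Finsupp.single_apply,
      Module.Basis.baseChange_apply]
    refine (polar_toVv (b' j) (b i)).trans ?_
    rw [hdual, apply_ite (algebraMap F (Fv F v)), map_one, map_zero]
    exact if_congr eq_comm rfl rfl
  refine (b'.baseChange (Fv F v)).forall_coord_eq_zero_iff.1 fun i ↦ ?_
  exact hcoord i ▸ hx (toVv F v (b i))

theorem exists_sub_toVv_mem_completion (hL : Submodule.span F (L : Set V) = ⊤) (z : Vv F V v) :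
    ∃ y : V, z - toVv F v y ∈ completion v L := by
  have hz : z ∈ Submodule.span (Fv F v) (toVv F v '' (L : Set V)) :=
    span_image_toVv hL ▸ Submodule.mem_top
  induction hz using Submodule.closure_induction with
  | zero => exact ⟨0, by simp [toVv]⟩
  | add z w _ _ hz hw =>
    obtain ⟨x, hx⟩ := hz
    obtain ⟨y, hy⟩ := hw
    refine ⟨x + y, ?_⟩
    rw [toVv_add, add_sub_add_comm]
    exact Submodule.add_mem _ hx hy
  | smul_mem c z hz =>
    obtain ⟨x, hx, rfl⟩ := hz
    obtain ⟨d, hd⟩ := exists_forall_sub_mul_mem_Ov c {1}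
    have hcd : c - algebraMap F (Fv F v) d ∈ Ov F v := by
      simpa only [mul_one] using hd 1 (Finset.mem_singleton_self 1)
    refine ⟨d • x, ?_⟩
    rw [toVv_smul, ← sub_smul]
    exact Submodule.smul_mem _ (⟨_, hcd⟩ : Ov F v) (toVv_mem_completion hx)

end Completion

section Localization

variable {F : Type} [Field F] {V : Type} [AddCommGroup V] [Module F V]
  {v : HeightOneSpectrum (NumberField.RingOfIntegers F)} {L : Submodule (OF F) V}

variable (v L) in
/-- The localization of the lattice `L` at the prime `v`, as an `O_F`-submodule of `V`. -/
def localization : Submodule (OF F) V where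
  carrier := {x | ∃ t : NumberField.RingOfIntegers F, t ∉ v.asIdeal ∧ (t : F) • x ∈ L}
  zero_mem' := ⟨1, v.asIdeal.one_notMem, by simp⟩
  add_mem' := by
    rintro x y ⟨s, hs, hx⟩ ⟨t, ht, hy⟩
    refine ⟨s * t, v.asIdeal.primeCompl.mul_mem hs ht, ?_⟩
    have hadd : ((s * t : NumberField.RingOfIntegers F) : F) • (x + y) =
        (t : F) • (s : F) • x + (s : F) • (t : F) • y := by
      push_cast
      module
    exact hadd ▸ L.add_mem (L.smul_mem (⟨t, t.2⟩ : OF F) hx) (L.smul_mem (⟨s, s.2⟩ : OF F) hy)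
  smul_mem' := by
    rintro a x ⟨t, ht, hx⟩
    exact ⟨t, ht, smul_comm (a : F) (t : F) x ▸ L.smul_mem a hx⟩

theorem le_localization : L ≤ localization v L :=
  fun x hx ↦ ⟨1, v.asIdeal.one_notMem, by simpa using hx⟩

variable [NumberField F]

theorem smul_mem_localization {d : F} (hd : algebraMap F (Fv F v) d ∈ Ov F v) {x : V}
    (hx : x ∈ localization v L) : d • x ∈ localization v L := by
  obtain ⟨s, hs, hsd⟩ := exists_mul_mem_OF hd
  obtain ⟨t, ht, htx⟩ := hx
  refine ⟨s * t, v.asIdeal.primeCompl.mul_mem hs ht, ?_⟩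
  have hsmul : ((s * t : NumberField.RingOfIntegers F) : F) • d • x =
      ((s : F) * d) • (t : F) • x := by
    push_cast
    module
  exact hsmul ▸ L.smul_mem (⟨_, hsd⟩ : OF F) htx

theorem mem_localization_of_repr_mem {ι : Type} (b : Module.Basis ι F V) (hb : ∀ i, b i ∈ L)
    {x : V} (hx : ∀ i, algebraMap F (Fv F v) (b.repr x i) ∈ Ov F v) : x ∈ localization v L := by
  rw [← b.linearCombination_repr x]
  exact Submodule.sum_mem _ fun i _ ↦ smul_mem_localization (hx i) (le_localization (hb i))

theorem exists_mem_localization_repr_sub_mem {ι : Type} (b : Module.Basis ι F V) {z : Vv F V v}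
    (hz : z ∈ completion v L) : ∃ y ∈ localization v L,
      ∀ i, (b.baseChange (Fv F v)).repr (z - toVv F v y) i ∈ Ov F v := by
  classical
  induction hz using Submodule.span_induction with
  | mem z hz =>
    obtain ⟨x, hx, rfl⟩ := hz
    refine ⟨x, le_localization hx, fun i ↦ ?_⟩
    rw [sub_self, map_zero]
    exact (Ov F v).zero_mem
  | zero =>
    refine ⟨0, Submodule.zero_mem _, fun i ↦ ?_⟩
    have hzero : (0 : Vv F V v) - toVv F v (0 : V) = 0 := by simp [toVv]
    rw [hzero, map_zero]
    exact (Ov F v).zero_mem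
  | add z w _ _ hz hw =>
    obtain ⟨x, hx, hzx⟩ := hz
    obtain ⟨y, hy, hwy⟩ := hw
    refine ⟨x + y, Submodule.add_mem _ hx hy, fun i ↦ ?_⟩
    rw [toVv_add, add_sub_add_comm, map_add]
    exact (Ov F v).add_mem (hzx i) (hwy i)
  | smul c z _ hz =>
    obtain ⟨y, hy, hzy⟩ := hz
    obtain ⟨d, hd⟩ := exists_forall_sub_mul_mem_Ov (c : Fv F v)
      (insert 1 ((b.repr y).support.image fun i ↦ algebraMap F (Fv F v) (b.repr y i)))
    have hcd : (c : Fv F v) - algebraMap F (Fv F v) d ∈ Ov F v := by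
      simpa only [mul_one] using hd 1 (Finset.mem_insert_self 1 _)
    have hdO : algebraMap F (Fv F v) d ∈ Ov F v := by
      simpa only [sub_sub_cancel] using (Ov F v).sub_mem c.2 hcd
    refine ⟨d • y, smul_mem_localization hdO hy, fun i ↦ ?_⟩
    change (b.baseChange (Fv F v)).repr ((c : Fv F v) • z - toVv F v (d • y)) i ∈ Ov F v
    rw [smul_sub_toVv_smul, map_add, map_smul, map_smul, Finsupp.add_apply, Finsupp.smul_apply,
      Finsupp.smul_apply, repr_toVv]
    refine (Ov F v).add_mem ((Ov F v).mul_mem c.2 (hzy i)) ?_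
    by_cases hi : b.repr y i = 0
    · rw [hi, map_zero, smul_zero]
      exact (Ov F v).zero_mem
    · exact hd _ (Finset.mem_insert_of_mem
        (Finset.mem_image_of_mem _ (Finsupp.mem_support_iff.2 hi)))

theorem mem_localization_of_toVv_mem_completion (hL : Submodule.span F (L : Set V) = ⊤) {x : V}
    (hx : toVv F v x ∈ completion v L) : x ∈ localization v L := by
  obtain ⟨ι, b, hb⟩ := exists_basis_mem hL
  obtain ⟨y, hy, hxy⟩ := exists_mem_localization_repr_sub_mem b hx
  have hsub : x - y ∈ localization v L :=
    mem_localization_of_repr_mem b hb fun i ↦ by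
      rw [← repr_toVv, toVv_sub]
      exact hxy i
  exact sub_add_cancel x y ▸ Submodule.add_mem _ hsub hy

theorem exists_forall_mul_mem_OF {J : Submodule (OF F) F} (hJ : J.FG)
    (h : ∀ d ∈ J, algebraMap F (Fv F v) d ∈ Ov F v) :
    ∃ t : NumberField.RingOfIntegers F, t ∉ v.asIdeal ∧ ∀ d ∈ J, (t : F) * d ∈ OF F := by
  induction J, hJ using Submodule.fg_induction with
  | singleton d =>
    obtain ⟨t, ht, htd⟩ := exists_mul_mem_OF (h d (Submodule.mem_span_singleton_self d))
    refine ⟨t, ht, fun e he ↦ ?_⟩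
    obtain ⟨a, rfl⟩ := Submodule.mem_span_singleton.1 he
    exact mul_left_comm (a : F) (t : F) d ▸ (OF F).mul_mem a.2 htd
  | sup J₁ J₂ _ _ h₁ h₂ =>
    obtain ⟨s, hs, hsJ⟩ := h₁ fun d hd ↦ h d (Submodule.mem_sup_left hd)
    obtain ⟨t, ht, htJ⟩ := h₂ fun d hd ↦ h d (Submodule.mem_sup_right hd)
    refine ⟨s * t, v.asIdeal.primeCompl.mul_mem hs ht, fun e he ↦ ?_⟩
    obtain ⟨d₁, hd₁, d₂, hd₂, rfl⟩ := Submodule.mem_sup.1 he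
    have hadd : ((s * t : NumberField.RingOfIntegers F) : F) * (d₁ + d₂) =
        t * (s * d₁) + s * (t * d₂) := by
      push_cast
      ring
    exact hadd ▸ (OF F).add_mem ((OF F).mul_mem t.2 (hsJ d₁ hd₁)) ((OF F).mul_mem s.2 (htJ d₂ hd₂))

end Localization

section LocalGlobal

variable {F : Type} [Field F] [NumberField F] {V : Type} [AddCommGroup V] [Module F V]
  {Q : QuadraticForm F V} {v : HeightOneSpectrum (NumberField.RingOfIntegers F)}
  {L : Submodule (OF F) V}

theorem toVv_mem_completion_of_integral (hL : IsMaximalLattice Q L) {y : V}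
    (hy : algebraMap F (Fv F v) (Q y) ∈ Ov F v)
    (hyL : ∀ x ∈ L, algebraMap F (Fv F v) (polar Q y x) ∈ Ov F v) :
    toVv F v y ∈ completion v L := by
  obtain ⟨s, hs, hsQ⟩ := exists_mul_mem_OF hy
  obtain ⟨t, ht, htL⟩ := exists_forall_mul_mem_OF
    (hL.fg.map ((polarBilin Q y).restrictScalars (OF F))) (v := v) (by
      rintro _ ⟨x, hx, rfl⟩
      exact hyL x hx)
  have hst : s * t ∉ v.asIdeal := v.asIdeal.primeCompl.mul_mem hs ht
  have hmem : ((s * t : NumberField.RingOfIntegers F) : F) • y ∈ L := by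
    refine hL.mem_of_integral _ ?_ fun x hx ↦ ?_
    · have hQ : Q (((s * t : NumberField.RingOfIntegers F) : F) • y) =
          (s * t ^ 2 : NumberField.RingOfIntegers F) * ((s : F) * Q y) := by
        rw [QuadraticMap.map_smul, smul_eq_mul]
        push_cast
        ring
      exact hQ ▸ (OF F).mul_mem (s * t ^ 2).2 hsQ
    · have hpolar : polar Q (((s * t : NumberField.RingOfIntegers F) : F) • y) x =
          (s : F) * ((t : F) * polar Q y x) := by
        rw [polar_smul_left, smul_eq_mul]
        push_cast
        ring
      exact hpolar ▸ (OF F).mul_mem s.2 (htL _ (Submodule.mem_map_of_mem hx))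
  have hne : algebraMap F (Fv F v) (s * t : NumberField.RingOfIntegers F) ≠ 0 := by
    rw [map_ne_zero, NumberField.RingOfIntegers.coe_ne_zero_iff]
    exact fun h ↦ hst (h ▸ v.asIdeal.zero_mem)
  rw [← inv_smul_smul₀ hne (toVv F v y), ← toVv_smul]
  have hinv := algebraMap_inv_mem_Ov hst
  rw [map_inv₀] at hinv
  exact Submodule.smul_mem _ (⟨_, hinv⟩ : Ov F v) (toVv_mem_completion hmem)

theorem isMaximalLattice_completion (hL : IsMaximalLattice Q L) :
    IsMaximalLattice (Qv F Q v) (completion v L) where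
  toIsIntegralLattice := isIntegralLattice_completion hL.toIsIntegralLattice
  mem_of_integral x hx hxL := by
    obtain ⟨y, hxy⟩ := exists_sub_toVv_mem_completion hL.span_eq_top x
    have hint := map_mem_completion (v := v) hL.map_mem
    have hy : toVv F v y ∈ completion v L ⊔ Submodule.span (Ov F v) {x} := by
      rw [← sub_sub_self x (toVv F v y)]
      exact Submodule.sub_mem _ (Submodule.mem_sup_right (Submodule.mem_span_singleton_self x))
        (Submodule.mem_sup_left hxy)
    have hsup : ∀ z ∈ completion v L ⊔ Submodule.span (Ov F v) {x}, Qv F Q v z ∈ Ov F v :=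
      fun z hz ↦ map_mem_of_mem_sup_span_singleton hint hx hxL hz
    have hyL : toVv F v y ∈ completion v L := by
      refine toVv_mem_completion_of_integral hL (Qv_toVv (v := v) y ▸ hsup _ hy) fun z hz ↦ ?_
      exact polar_toVv (v := v) y z ▸
        polar_mem hsup hy (Submodule.mem_sup_left (toVv_mem_completion hz))
    exact sub_add_cancel x (toVv F v y) ▸ Submodule.add_mem _ hxy hyL

theorem mem_of_forall_mem_localization {x : V}
    (hx : ∀ v : HeightOneSpectrum (NumberField.RingOfIntegers F), x ∈ localization v L) :
    x ∈ L := by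
  let I : Ideal (NumberField.RingOfIntegers F) := L.comap (LinearMap.toSpanSingleton (OF F) V x)
  have hI : I = ⊤ := by
    by_contra hne
    obtain ⟨M, hM, hIM⟩ := I.exists_le_maximal hne
    have hbot : M ≠ ⊥ :=
      Ring.ne_bot_of_isMaximal_of_not_isField hM (NumberField.RingOfIntegers.not_isField F)
    obtain ⟨t, htM, htx⟩ := hx ⟨M, hM.isPrime, hbot⟩
    exact htM (hIM htx)
  have hone : (1 : NumberField.RingOfIntegers F) ∈ I := hI ▸ Submodule.mem_top
  exact one_smul F x ▸ hone

theorem isMaximalLattice_iff_forall_completion (hL : IsIntegralLattice Q L) :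
    IsMaximalLattice Q L ↔ ∀ v : HeightOneSpectrum (NumberField.RingOfIntegers F),
      IsMaximalLattice (Qv F Q v) (completion v L) := by
  refine ⟨fun h v ↦ isMaximalLattice_completion h, fun h ↦ ⟨hL, fun x hx hxL ↦ ?_⟩⟩
  refine mem_of_forall_mem_localization fun v ↦
    mem_localization_of_toVv_mem_completion hL.span_eq_top
      ((h v).mem_of_integral _ ?_ fun z hz ↦ ?_)
  · exact Qv_toVv (v := v) x ▸ algebraMap_mem_Ov hx
  · refine polar_mem_of_mem_span ?_ hz
    rintro _ ⟨y, hy, rfl⟩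
    exact polar_toVv (v := v) x y ▸ algebraMap_mem_Ov (hxL y hy)

end LocalGlobal

end QGlob

theorem locADC_iff_maximal_rank_succ_general
    (F : Type) [Field F] [NumberField F]
    {V : Type} [AddCommGroup V] [Module F V]
    (Q : QuadraticForm F V) (hQ : Nondeg Q)
    (n : ℕ) (hn : 2 ≤ n) (hrank : Module.finrank F V = n + 1)
    (L : Set V) (hL : IsLatticeOn (OF F) L) (hLint : IsIntegral (OF F) Q L) :
    IsLocADC F Q L n ↔ IsMaximal (OF F) Q L := by
  have : FiniteDimensional F V := Module.finite_of_finrank_pos (hrank ▸ n.succ_pos)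
  obtain ⟨L, hLat, rfl⟩ := exists_isIntegralLattice_coe_eq hL hLint
  rw [hLat.isMaximal_iff, isMaximalLattice_iff_forall_completion hLat]
  refine forall_congr' fun v ↦ ?_
  rw [← coe_completion]
  have htwo : (2 : Fv F v) ≠ 0 :=
    map_ofNat (algebraMap F (Fv F v)) 2 ▸ (map_ne_zero _).2 two_ne_zero
  exact isADC_iff_isMaximalLattice_of_finrank_eq_add_one htwo hn
    ((Module.finrank_baseChange ..).trans hrank) (nondeg_Qv hQ) (isIntegralLattice_completion hLat)

/-- Let `F` be a totally real number field, `n ≥ 2` an integer, and `L`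
a positive definite integral `O_F`-lattice of rank `n+1`.  Then `L` is locally `n`-ADC
if and only if `L` is `O_F`-maximal. -/
theorem locADC_iff_maximal_rank_succ
    (F : Type) [Field F] [NumberField F] (hF : TotallyReal F)
    {V : Type} [AddCommGroup V] [Module F V]
    (Q : QuadraticForm F V) (hQ : Nondeg Q) (hQpos : PosDef F Q)
    (n : ℕ) (hn : 2 ≤ n) (hrank : Module.finrank F V = n + 1)
    (L : Set V) (hL : IsLatticeOn (OF F) L) (hLint : IsIntegral (OF F) Q L) :
    IsLocADC F Q L n ↔ IsMaximal (OF F) Q L := by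
  exact locADC_iff_maximal_rank_succ_general F Q hQ n hn hrank L hL hLint
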